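/- Fix a positive integer q. Let p be a positive integer and f_0, …, f_{p−1} polynomials with rational coefficients such that o_P(q;n) = f_{n mod p}(n) for every integer n ≥ 0. Then the number of connected components of (B°)^q \ ⋃A_P^q (equivalently, the number of labelled nonattacking configuration types of q pieces) equals f_{p−1}(−1), the value at n = −1 of the constituent corresponding to n ≡ −1 (mod p). -/

import Mathlib

open MeasureTheory Pointwise

namespace EH

/-- Quasi-polynomial functions on `ℤ^n`. -/
inductive QP {n : ℕ} : ((Fin n → ℤ) → ℚ) → Prop
  | per (M : ℤ) (hM : 0 < M) (f : (Fin n → ℤ) → ℚ)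
      (h : ∀ v w : Fin n → ℤ, f (v + M • w) = f v) : QP f
  | coord (i : Fin n) : QP (fun v => (v i : ℚ))
  | add (f g : (Fin n → ℤ) → ℚ) : QP f → QP g → QP (fun v => f v + g v)
  | mul (f g : (Fin n → ℤ) → ℚ) : QP f → QP g → QP (fun v => f v * g v)

theorem QP.const {n : ℕ} (c : ℚ) : QP (fun _ : Fin n → ℤ => c) :=
  QP.per 1 one_pos _ (fun _ _ => rfl)

theorem QP.smul {n : ℕ} (c : ℚ) {f : (Fin n → ℤ) → ℚ} (hf : QP f) : QP (fun v => c * f v) :=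
  QP.mul _ _ (QP.const c) hf

theorem QP.sub {n : ℕ} {f g : (Fin n → ℤ) → ℚ} (hf : QP f) (hg : QP g) :
    QP (fun v => f v - g v) := by
  have h := QP.add _ _ hf (QP.smul (-1) hg)
  convert h using 2
  ring

theorem QP.sum {n : ℕ} {ι : Type*} (s : Finset ι) (F : ι → (Fin n → ℤ) → ℚ)
    (h : ∀ i ∈ s, QP (F i)) : QP (fun v => ∑ i ∈ s, F i v) := by
  classical
  induction s using Finset.induction_on with
  | empty => simpa using QP.const 0
  | insert a s ha ih =>
    simp only [Finset.sum_insert ha]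
    exact QP.add _ _ (h a (by simp)) (ih (fun i hi => h i (by simp [hi])))

theorem QP.shift {n : ℕ} {f : (Fin n → ℤ) → ℚ} (hf : QP f) (w : Fin n → ℤ) :
    QP (fun v => f (v + w)) := by
  induction hf with
  | per M hM f h =>
    refine QP.per M hM _ (fun v u => ?_)
    rw [add_right_comm, h]
  | coord i =>
    simp only [Pi.add_apply, Int.cast_add]
    exact QP.add _ _ (QP.coord i) (QP.const _)
  | add f g _ _ h1 h2 => exact QP.add _ _ h1 h2
  | mul f g _ _ h1 h2 => exact QP.mul _ _ h1 h2

theorem QP.comp_poly {n : ℕ} {f : (Fin n → ℤ) → ℚ} (hf : QP f) (P : Polynomial ℚ) :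
    QP (fun v => P.eval (f v)) := by
  induction P using Polynomial.induction_on' with
  | add p q hp hq =>
    simp only [Polynomial.eval_add]
    exact QP.add _ _ hp hq
  | monomial k a =>
    simp only [Polynomial.eval_monomial]
    refine QP.smul a ?_
    induction k with
    | zero => simpa using QP.const 1
    | succ k ih => simpa only [pow_succ] using QP.mul _ _ ih hf

/-- The first unit vector. -/
def e0 {n : ℕ} : Fin (n + 1) → ℤ := Pi.single 0 1

inductive NF {n : ℕ} : ((Fin (n + 1) → ℤ) → ℚ) → Prop
  | mk (k : ℕ) (c : (Fin (n + 1) → ℤ) → ℚ) (hc : QP c) (M : ℕ) (hM : 0 < M)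
      (h : ∀ v, ∀ a : ℤ, c (v + (a * M) • e0) = c v) : NF (fun v => (v 0 : ℚ) ^ k * c v)
  | add (f g : (Fin (n + 1) → ℤ) → ℚ) : NF f → NF g → NF (fun v => f v + g v)

theorem NF.mul {n : ℕ} {f g : (Fin (n + 1) → ℤ) → ℚ} (hf : NF f) (hg : NF g) :
    NF (fun v => f v * g v) := by
  induction hf with
  | mk k c hc M hM h =>
    induction hg with
    | mk k' c' hc' M' hM' h' =>
      have := NF.mk (k + k') (fun v => c v * c' v) (QP.mul _ _ hc hc') (M * M')
        (Nat.mul_pos hM hM') (fun v a => by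
          have h1 := h v (a * M')
          have h2 := h' v (a * M)
          rw [show a * (M' : ℤ) * M = a * ((M * M' : ℕ) : ℤ) by push_cast; ring] at h1
          rw [show a * (M : ℤ) * M' = a * ((M * M' : ℕ) : ℤ) by push_cast; ring] at h2
          simp only [h1, h2])
      convert this using 2
      ring
    | add f g _ _ h1 h2 =>
      have := NF.add _ _ h1 h2
      convert this using 2
      ring
  | add f g _ _ h1 h2 =>
    have := NF.add _ _ h1 h2
    convert this using 2
    ring

theorem QP.nf {n : ℕ} {f : (Fin (n + 1) → ℤ) → ℚ} (hf : QP f) : NF f := by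
  induction hf with
  | per M hM f h =>
    have := NF.mk 0 f (QP.per M hM f h) M.toNat (by omega) (fun v a => by
      rw [Int.toNat_of_nonneg hM.le, mul_comm, mul_smul]; exact h _ _)
    simpa using this
  | coord i =>
    refine Fin.cases ?_ (fun i => ?_) i
    · have := NF.mk (n := n) 1 (fun _ => 1) (QP.const 1) 1 one_pos (fun _ _ => rfl)
      simpa using this
    · have := NF.mk (n := n) 0 (fun v => (v i.succ : ℚ)) (QP.coord _) 1 one_pos (fun v a => by
        simp [e0])
      simpa using this
  | add f g _ _ h1 h2 => exact NF.add _ _ h1 h2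
  | mul f g _ _ h1 h2 => exact NF.mul h1 h2

theorem exists_poly_antidiff (k M : ℕ) (hM : 0 < M) :
    ∃ P : Polynomial ℚ, ∀ y : ℚ, P.eval (y + M) - P.eval y = y ^ k := by
  have hM' : (M : ℚ) ≠ 0 := by positivity
  refine ⟨Polynomial.C ((M : ℚ) ^ k / (k + 1)) *
    (Polynomial.bernoulli (k + 1)).comp (Polynomial.C ((M : ℚ)⁻¹) * Polynomial.X), fun y => ?_⟩
  simp only [Polynomial.eval_mul, Polynomial.eval_C, Polynomial.eval_comp, Polynomial.eval_X]
  have h := Polynomial.bernoulli_eval_one_add (k + 1) ((M : ℚ)⁻¹ * y)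
  rw [show (M : ℚ)⁻¹ * (y + M) = 1 + (M : ℚ)⁻¹ * y by field_simp; ring, h]
  have : (k : ℚ) + 1 ≠ 0 := by positivity
  have hk : (M : ℚ) ^ k * ((M : ℚ)⁻¹) ^ k = 1 := by
    rw [← mul_pow, mul_inv_cancel₀ hM', one_pow]
  have hk2 : k + 1 - 1 = k := by omega
  rw [hk2, mul_pow]
  push_cast
  field_simp
  linear_combination (y ^ k * (k + 1)) * hk

theorem NF.antidiff {n : ℕ} {f : (Fin (n + 1) → ℤ) → ℚ} (hf : NF f) :
    ∃ G, QP G ∧ ∀ v, G (v + e0) - G v = f v := by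
  induction hf with
  | mk k c hc M hM h =>
    obtain ⟨P, hP⟩ := exists_poly_antidiff k M hM
    have hF : QP (fun v : Fin (n + 1) → ℤ => P.eval (v 0 : ℚ) * c v) :=
      QP.mul _ _ ((QP.coord 0).comp_poly P) hc
    refine ⟨fun v => ∑ j ∈ Finset.range M,
      (fun v : Fin (n + 1) → ℤ => P.eval (v 0 : ℚ) * c v) (v + (j : ℤ) • e0),
      QP.sum _ _ (fun j _ => hF.shift _), fun v => ?_⟩
    set F := (fun v : Fin (n + 1) → ℤ => P.eval (v 0 : ℚ) * c v) with hFd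
    have e : ∀ j : ℕ, v + e0 + (j : ℤ) • e0 = v + ((j + 1 : ℕ) : ℤ) • (e0 : Fin (n + 1) → ℤ) := by
      intro j; push_cast; rw [add_smul, one_smul]; abel
    simp only [e]
    rw [← Finset.sum_sub_distrib, Finset.sum_range_sub (fun j : ℕ => F (v + (j : ℤ) • e0))]
    have h1 := h v 1
    rw [one_mul] at h1
    simp only [hFd, h1]
    have := hP (v 0 : ℚ)
    simp [e0]
    rw [← this]
    ring
  | add f g _ _ h1 h2 =>
    obtain ⟨G1, q1, e1⟩ := h1
    obtain ⟨G2, q2, e2⟩ := h2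
    refine ⟨_, QP.add _ _ q1 q2, fun v => ?_⟩
    change _ = f v + g v
    rw [← e1, ← e2]
    ring

theorem cons_e0 {n : ℕ} (y : ℤ) (x : Fin n → ℤ) :
    (Fin.cons y x : Fin (n + 1) → ℤ) + e0 = Fin.cons (y + 1) x := by
  funext i
  refine Fin.cases ?_ (fun i => ?_) i <;> simp [e0]

theorem QP.antisum {n : ℕ} {f : (Fin (n + 1) → ℤ) → ℚ} (hf : QP f) :
    ∃ G, QP G ∧ ∀ (x : Fin n → ℤ) (a b : ℤ), a ≤ b →
      ∑ y ∈ Finset.Ico a b, f (Fin.cons y x) = G (Fin.cons b x) - G (Fin.cons a x) := by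
  obtain ⟨G, hG, h⟩ := hf.nf.antidiff
  refine ⟨G, hG, fun x a b hab => ?_⟩
  induction b, hab using Int.leInduction with
  | base => simp
  | succ b hb ih =>
    have : Finset.Ico a (b + 1) = insert b (Finset.Ico a b) := by
      ext y; simp; omega
    rw [this, Finset.sum_insert (by simp), ih, ← h, cons_e0]
    ring

/-- rational linear form at an integer point -/
def evZ {n : ℕ} (l : Fin n → ℚ) (x : Fin n → ℤ) : ℚ := ∑ i, l i * x i
/-- rational linear form at a real point -/
noncomputable def evR {n : ℕ} (l : Fin n → ℚ) (x : Fin n → ℝ) : ℝ := ∑ i, (l i : ℝ) * x i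

theorem evR_cast {n : ℕ} (l : Fin n → ℚ) (x : Fin n → ℤ) :
    evR l (fun i => (x i : ℝ)) = (evZ l x : ℝ) := by
  simp [evR, evZ]

theorem exists_den {n : ℕ} (l : Fin n → ℚ) :
    ∃ D : ℤ, 0 < D ∧ ∀ w : Fin n → ℤ, ∃ m : ℤ, evZ l (D • w) = m := by
  refine ⟨∏ i, ((l i).den : ℤ), Finset.prod_pos (fun i _ => by exact_mod_cast (l i).pos),
    fun w => ?_⟩
  have : ∀ i, ∃ m : ℤ, l i * (((∏ i, ((l i).den : ℤ)) • w) i : ℤ) = (m : ℚ) := by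
    intro i
    obtain ⟨c, hc⟩ := Finset.dvd_prod_of_mem (fun i => ((l i).den : ℤ)) (Finset.mem_univ i)
    refine ⟨(l i).num * c * w i, ?_⟩
    have h0 : l i * (l i).den = (l i).num := Rat.mul_den_eq_num _
    rw [hc]
    simp only [Pi.smul_apply, smul_eq_mul]
    push_cast
    rw [← h0]
    ring
  choose m hm using this
  refine ⟨∑ i, m i, ?_⟩
  simp only [evZ, hm]
  push_cast
  rfl

theorem evZ_add {n : ℕ} (l : Fin n → ℚ) (x y : Fin n → ℤ) :
    evZ l (x + y) = evZ l x + evZ l y := by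
  simp [evZ, mul_add, Finset.sum_add_distrib]

theorem evZ_smul {n : ℕ} (l : Fin n → ℚ) (a : ℤ) (y : Fin n → ℤ) :
    evZ l (a • y) = a * evZ l y := by
  simp only [evZ, Finset.mul_sum, Pi.smul_apply, smul_eq_mul]
  refine Finset.sum_congr rfl (fun i _ => ?_)
  push_cast; ring

theorem QP.lin {n : ℕ} (l : Fin n → ℚ) : QP (evZ l) := by
  have := QP.sum Finset.univ (fun i (v : Fin n → ℤ) => l i * (v i : ℚ))
    (fun i _ => QP.smul _ (QP.coord i))
  exact this

theorem QP.ceil {n : ℕ} (l : Fin n → ℚ) : QP (fun x : Fin n → ℤ => (⌈evZ l x⌉ : ℚ)) := by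
  obtain ⟨D, hD, h⟩ := exists_den l
  have h1 : QP (fun x : Fin n → ℤ => (⌈evZ l x⌉ : ℚ) - evZ l x) := by
    refine QP.per D hD _ (fun v w => ?_)
    obtain ⟨m, hm⟩ := h w
    rw [evZ_add, hm, Int.ceil_add_intCast]
    push_cast; ring
  have := QP.add _ _ h1 (QP.lin l)
  simpa using this

theorem cons_add' {n : ℕ} (a b : ℤ) (x y : Fin n → ℤ) :
    (Fin.cons (a + b) (x + y) : Fin (n + 1) → ℤ) = Fin.cons a x + Fin.cons b y := by
  funext i
  refine Fin.cases ?_ (fun i => ?_) i <;> simp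

theorem QP.subst {n : ℕ} {G : (Fin (n + 1) → ℤ) → ℚ} (hG : QP G) (u : (Fin n → ℤ) → ℤ)
    (hu : QP (fun x => (u x : ℚ)))
    (hper : ∃ D : ℤ, 0 < D ∧ ∀ w, ∃ m : ℤ, ∀ x, ∀ a : ℤ, u (x + (a * D) • w) = u x + a * m) :
    QP (fun x => G (Fin.cons (u x) x)) := by
  induction hG with
  | per M hM f h =>
    obtain ⟨D, hD, hper⟩ := hper
    refine QP.per (M * D) (by positivity) _ (fun v w => ?_)
    obtain ⟨m, hm⟩ := hper w
    rw [hm, cons_add']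
    have : (Fin.cons (M * m) ((M * D) • w) : Fin (n + 1) → ℤ) = M • Fin.cons m (D • w) := by
      funext i
      refine Fin.cases ?_ (fun i => ?_) i <;> simp [mul_assoc]
    rw [this, h]
  | coord i =>
    refine Fin.cases ?_ (fun i => ?_) i
    · simpa using hu
    · simpa using QP.coord i
  | add f g _ _ h1 h2 => exact QP.add _ _ h1 h2
  | mul f g _ _ h1 h2 => exact QP.mul _ _ h1 h2

theorem QP.subst_ceil {n : ℕ} {G : (Fin (n + 1) → ℤ) → ℚ} (hG : QP G) (l : Fin n → ℚ) :
    QP (fun x => G (Fin.cons ⌈evZ l x⌉ x)) := by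
  refine hG.subst _ (QP.ceil l) ?_
  obtain ⟨D, hD, h⟩ := exists_den l
  refine ⟨D, hD, fun w => ?_⟩
  obtain ⟨m, hm⟩ := h w
  refine ⟨m, fun x a => ?_⟩
  rw [mul_smul, evZ_add, evZ_smul, hm, ← Int.cast_mul, Int.ceil_add_intCast]

theorem floor_eq' {n : ℕ} (l : Fin n → ℚ) (x : Fin n → ℤ) :
    ⌊evZ l x⌋ = -⌈evZ (-l) x⌉ := by
  rw [show evZ (-l) x = - evZ l x by simp [evZ], Int.ceil_neg]; simp

theorem QP.subst_floor {n : ℕ} {G : (Fin (n + 1) → ℤ) → ℚ} (hG : QP G) (l : Fin n → ℚ) :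
    QP (fun x => G (Fin.cons (⌊evZ l x⌋ + 1) x)) := by
  refine hG.subst _ ?_ ?_
  · have := QP.add _ _ (QP.smul (-1) (QP.ceil (-l))) (QP.const 1)
    convert this using 2
    rw [floor_eq']; push_cast; ring
  · obtain ⟨D, hD, h⟩ := exists_den l
    refine ⟨D, hD, fun w => ?_⟩
    obtain ⟨m, hm⟩ := h w
    refine ⟨m, fun x a => ?_⟩
    rw [mul_smul, evZ_add, evZ_smul, hm, ← Int.cast_mul, Int.floor_add_intCast]
    ring

theorem QP.one_var {f : (Fin 1 → ℤ) → ℚ} (hf : QP f) :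
    ∃ N : ℕ, 0 < N ∧ ∃ P : Polynomial ℚ, ∀ k : ℤ, f (fun _ => N * k) = P.eval (k : ℚ) := by
  induction hf with
  | per M hM f h =>
    refine ⟨M.toNat, by omega, Polynomial.C (f 0), fun k => ?_⟩
    rw [Int.toNat_of_nonneg hM.le, Polynomial.eval_C, ← h 0 (fun _ => k)]
    congr 1
    funext i
    simp
  | coord i => exact ⟨1, one_pos, Polynomial.X, fun k => by simp⟩
  | add f g _ _ h1 h2 =>
    obtain ⟨N1, p1, P1, e1⟩ := h1
    obtain ⟨N2, p2, P2, e2⟩ := h2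
    refine ⟨N1 * N2, Nat.mul_pos p1 p2, P1.comp (Polynomial.C (N2 : ℚ) * Polynomial.X) +
      P2.comp (Polynomial.C (N1 : ℚ) * Polynomial.X), fun k => ?_⟩
    have a1 := e1 (N2 * k)
    have a2 := e2 (N1 * k)
    rw [← mul_assoc] at a1 a2
    rw [mul_comm (N2 : ℤ)] at a2
    push_cast at *
    simp [a1, a2]
  | mul f g _ _ h1 h2 =>
    obtain ⟨N1, p1, P1, e1⟩ := h1
    obtain ⟨N2, p2, P2, e2⟩ := h2
    refine ⟨N1 * N2, Nat.mul_pos p1 p2, P1.comp (Polynomial.C (N2 : ℚ) * Polynomial.X) *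
      P2.comp (Polynomial.C (N1 : ℚ) * Polynomial.X), fun k => ?_⟩
    have a1 := e1 (N2 * k)
    have a2 := e2 (N1 * k)
    rw [← mul_assoc] at a1 a2
    rw [mul_comm (N2 : ℤ)] at a2
    push_cast at *
    simp [a1, a2]

open Filter Topology in
/-- `φ` has Euler integral `c`. -/
def HasEI (φ : ℝ → ℚ) (c : ℚ) : Prop :=
  ∃ ψ : ℝ → ℚ, (∀ y, ∀ᶠ z in 𝓝[>] y, φ z = ψ y) ∧
    ∃ s : Finset ℝ, (∀ y, y ∉ s → φ y = ψ y) ∧ c = ∑ y ∈ s, (φ y - ψ y)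

theorem HasEI.unique {φ : ℝ → ℚ} {c d : ℚ} (h1 : HasEI φ c) (h2 : HasEI φ d) : c = d := by
  classical
  obtain ⟨ψ, a, s, b, rfl⟩ := h1
  obtain ⟨ψ', a', s', b', rfl⟩ := h2
  have : ψ = ψ' := by
    funext y
    obtain ⟨z, hz1, hz2⟩ := ((a y).and (a' y)).exists
    rw [← hz1, hz2]
  subst this
  rw [Finset.sum_subset (s₁ := s) (s₂ := s ∪ s') Finset.subset_union_left
      (fun x _ hx => by rw [b x hx, sub_self]),
    Finset.sum_subset (s₁ := s') (s₂ := s ∪ s') Finset.subset_union_right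
      (fun x _ hx => by rw [b' x hx, sub_self])]

theorem HasEI.add {φ φ' : ℝ → ℚ} {c d : ℚ} (h1 : HasEI φ c) (h2 : HasEI φ' d) :
    HasEI (fun y => φ y + φ' y) (c + d) := by
  classical
  obtain ⟨ψ, a, s, b, rfl⟩ := h1
  obtain ⟨ψ', a', s', b', rfl⟩ := h2
  refine ⟨fun y => ψ y + ψ' y, fun y => ?_, s ∪ s', fun y hy => ?_, ?_⟩
  · filter_upwards [a y, a' y] with z h h'
    rw [h, h']
  · simp only [Finset.mem_union, not_or] at hy
    simp only [b y hy.1, b' y hy.2]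
  · rw [Finset.sum_subset (s₁ := s) (s₂ := s ∪ s') Finset.subset_union_left
        (fun x _ hx => by rw [b x hx, sub_self]),
      Finset.sum_subset (s₁ := s') (s₂ := s ∪ s') Finset.subset_union_right
        (fun x _ hx => by rw [b' x hx, sub_self]), ← Finset.sum_add_distrib]
    refine Finset.sum_congr rfl (fun y _ => ?_)
    ring

theorem HasEI.zero : HasEI (fun _ => 0) 0 :=
  ⟨fun _ => 0, fun _ => Filter.Eventually.of_forall (fun _ => rfl), ∅, fun _ _ => rfl, by simp⟩

theorem HasEI.Ioo (a b : ℝ) (c : ℚ) :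
    HasEI (fun y => if a < y ∧ y < b then c else 0) (if a < b then -c else 0) := by
  by_cases hab : a < b
  · refine ⟨fun y => if a ≤ y ∧ y < b then c else 0, fun y => ?_, {a}, fun y hy => ?_, ?_⟩
    · by_cases h1 : a ≤ y
      swap
      · filter_upwards [Ioo_mem_nhdsGT (not_le.mp h1)] with z hz
        rw [if_neg (fun h' => lt_asymm hz.2 h'.1), if_neg (fun h' => h1 h'.1)]
      by_cases h : y < b
      · filter_upwards [Ioo_mem_nhdsGT h] with z hz
        rw [if_pos ⟨h1.trans_lt hz.1, hz.2⟩, if_pos ⟨h1, h⟩]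
      · filter_upwards [self_mem_nhdsWithin] with z hz
        simp only [Set.mem_Ioi] at hz
        rw [if_neg (fun h' => h (hz.trans h'.2)), if_neg (fun h' => h h'.2)]
    · simp only [Finset.mem_singleton] at hy
      have : a < y ↔ a ≤ y := ⟨le_of_lt, fun h => lt_of_le_of_ne h (Ne.symm hy)⟩
      simp only [this]
    · simp [hab]
  · have : (fun y => if a < y ∧ y < b then c else 0) = fun _ => 0 := by
      funext y
      rw [if_neg (fun h => hab (h.1.trans h.2))]
    rw [this, if_neg hab]
    exact HasEI.zero

/-- pairs (function on integer points, limiting function on real points) -/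
inductive Good {n : ℕ} : ((Fin n → ℤ) → ℚ) → ((Fin n → ℝ) → ℚ) → Prop
  | qp (g : (Fin n → ℤ) → ℚ) : QP g → Good g (fun _ => g 0)
  | add (h h' : (Fin n → ℤ) → ℚ) (φ φ' : (Fin n → ℝ) → ℚ) : Good h φ → Good h' φ' →
      Good (fun x => h x + h' x) (fun x => φ x + φ' x)
  | cut (l : Fin n → ℚ) (h : (Fin n → ℤ) → ℚ) (φ : (Fin n → ℝ) → ℚ) : Good h φ →
      Good (fun x => if 0 < evZ l x then h x else 0) (fun x => if 0 < evR l x then φ x else 0)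

theorem Good.mulqp {n : ℕ} {h : (Fin n → ℤ) → ℚ} {φ : (Fin n → ℝ) → ℚ} (H : Good h φ)
    {g : (Fin n → ℤ) → ℚ} (hg : QP g) : Good (fun x => g x * h x) (fun x => g 0 * φ x) := by
  induction H with
  | qp g' hg' => exact Good.qp _ (QP.mul _ _ hg hg')
  | add h h' φ φ' _ _ i1 i2 =>
    simp only [mul_add]
    exact Good.add _ _ _ _ i1 i2
  | cut l h φ _ i =>
    have := Good.cut l _ _ i
    simpa only [mul_ite, mul_zero] using this

theorem Good.mul {n : ℕ} {h h' : (Fin n → ℤ) → ℚ} {φ φ' : (Fin n → ℝ) → ℚ} (H : Good h φ)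
    (H' : Good h' φ') : Good (fun x => h x * h' x) (fun x => φ x * φ' x) := by
  induction H with
  | qp g hg => exact H'.mulqp hg
  | add h h' φ φ' _ _ i1 i2 =>
    simp only [add_mul]
    exact Good.add _ _ _ _ i1 i2
  | cut l h φ _ i =>
    have := Good.cut l _ _ i
    simpa only [ite_mul, zero_mul] using this

theorem Good.sub {n : ℕ} {h h' : (Fin n → ℤ) → ℚ} {φ φ' : (Fin n → ℝ) → ℚ} (H : Good h φ)
    (H' : Good h' φ') : Good (fun x => h x - h' x) (fun x => φ x - φ' x) := by
  have := Good.add _ _ _ _ H (H'.mulqp (QP.const (-1)))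
  simpa only [neg_mul, one_mul, ← sub_eq_add_neg] using this

/-- case distinction -/
theorem Good.ite {n : ℕ} {h h' : (Fin n → ℤ) → ℚ} {φ φ' : (Fin n → ℝ) → ℚ} (l : Fin n → ℚ)
    (H : Good h φ) (H' : Good h' φ') : Good (fun x => if 0 < evZ l x then h x else h' x)
      (fun x => if 0 < evR l x then φ x else φ' x) := by
  have := Good.add _ _ _ _ (Good.cut l _ _ H) (H'.sub (Good.cut l _ _ H'))
  convert this using 2
  · split_ifs <;> ring
  · split_ifs <;> ring

theorem evZ_cons {n : ℕ} (l : Fin (n + 1) → ℚ) (y : ℤ) (x : Fin n → ℤ) :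
    evZ l (Fin.cons y x) = l 0 * y + evZ (Fin.tail l) x := by
  simp [evZ, Fin.sum_univ_succ, Fin.tail]

theorem evR_cons {n : ℕ} (l : Fin (n + 1) → ℚ) (y : ℝ) (x : Fin n → ℝ) :
    evR l (Fin.cons y x) = l 0 * y + evR (Fin.tail l) x := by
  simp [evR, Fin.sum_univ_succ, Fin.tail]

theorem evZ_sub' {n : ℕ} (l l' : Fin n → ℚ) (x : Fin n → ℤ) :
    evZ (l - l') x = evZ l x - evZ l' x := by
  simp [evZ, sub_mul]

theorem evR_sub' {n : ℕ} (l l' : Fin n → ℚ) (x : Fin n → ℝ) :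
    evR (l - l') x = evR l x - evR l' x := by
  simp [evR, sub_mul]

theorem evZ_smul' {n : ℕ} (a : ℚ) (l : Fin n → ℚ) (x : Fin n → ℤ) :
    evZ (a • l) x = a * evZ l x := by
  simp [evZ, Finset.mul_sum, mul_assoc]

theorem evR_smul' {n : ℕ} (a : ℚ) (l : Fin n → ℚ) (x : Fin n → ℝ) :
    evR (a • l) x = a * evR l x := by
  simp [evR, Finset.mul_sum, mul_assoc]

open Classical in
/-- fibre sum -/
noncomputable def fsum {n : ℕ} (l u : Fin n → ℚ) (Ls : List (Fin (n + 1) → ℚ))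
    (h : (Fin (n + 1) → ℤ) → ℚ) (x : Fin n → ℤ) : ℚ :=
  ∑ᶠ y : ℤ, if (evZ l x < y ∧ (y : ℚ) < evZ u x) ∧ ∀ k ∈ Ls, 0 < evZ k (Fin.cons y x)
    then h (Fin.cons y x) else 0

open Classical in
/-- fibre function -/
noncomputable def ffun {n : ℕ} (l u : Fin n → ℚ) (Ls : List (Fin (n + 1) → ℚ))
    (φ : (Fin (n + 1) → ℝ) → ℚ) (x : Fin n → ℝ) (y : ℝ) : ℚ :=
  if (evR l x < y ∧ y < evR u x) ∧ ∀ k ∈ Ls, 0 < evR k (Fin.cons y x)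
    then φ (Fin.cons y x) else 0

theorem fsum_nil {n : ℕ} (l u : Fin n → ℚ) 
    (h : (Fin (n + 1) → ℤ) → ℚ) (x : Fin n → ℤ) : fsum l u [] h x =
    ∑ y ∈ Finset.Ico (⌊evZ l x⌋ + 1) ⌈evZ u x⌉, h (Fin.cons y x) := by
  unfold fsum
  rw [finsum_eq_sum_of_support_subset (s := Finset.Ico (⌊evZ l x⌋ + 1) ⌈evZ u x⌉)]
  · refine Finset.sum_congr rfl (fun y hy => ?_)
    rw [Finset.mem_Ico, Int.add_one_le_iff, Int.floor_lt, Int.lt_ceil] at hy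
    rw [if_pos]
    exact ⟨hy, by simp⟩
  · intro y hy
    simp only [Function.mem_support, ne_eq, ite_eq_right_iff, Classical.not_imp] at hy
    simp only [Finset.coe_Ico, Set.mem_Ico]
    rw [Int.add_one_le_iff, Int.floor_lt, Int.lt_ceil]
    exact hy.1.1

theorem fsum_add {n : ℕ} (l u : Fin n → ℚ) (Ls : List (Fin (n + 1) → ℚ))
    (h h' : (Fin (n + 1) → ℤ) → ℚ) (x : Fin n → ℤ) :
    fsum l u Ls (fun v => h v + h' v) x = fsum l u Ls h x + fsum l u Ls h' x := by
  have fin : ∀ h : (Fin (n + 1) → ℤ) → ℚ, (Function.support (fun y : ℤ =>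
    open Classical in if (evZ l x < y ∧ (y : ℚ) < evZ u x) ∧ ∀ k ∈ Ls, 0 < evZ k (Fin.cons y x)
    then h (Fin.cons y x) else 0)).Finite := by
    intro h
    refine (Finset.finite_toSet (Finset.Ico (⌊evZ l x⌋ + 1) ⌈evZ u x⌉)).subset ?_
    intro y hy
    simp only [Function.mem_support, ne_eq, ite_eq_right_iff, Classical.not_imp] at hy
    simp only [Finset.coe_Ico, Set.mem_Ico]
    rw [Int.add_one_le_iff, Int.floor_lt, Int.lt_ceil]
    exact hy.1.1
  unfold fsum
  rw [← finsum_add_distrib (fin h) (fin h')]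
  refine finsum_congr (fun y => ?_)
  split_ifs <;> simp

theorem ffun_add {n : ℕ} (l u : Fin n → ℚ) (Ls : List (Fin (n + 1) → ℚ))
    (h h' : (Fin (n + 1) → ℝ) → ℚ) (x : Fin n → ℝ) :
    ffun l u Ls (fun v => h v + h' v) x = fun y => ffun l u Ls h x y + ffun l u Ls h' x y := by
  funext y
  unfold ffun
  split_ifs <;> simp

theorem step_qp {n : ℕ} (Ls : List (Fin (n + 1) → ℚ)) (g : (Fin (n + 1) → ℤ) → ℚ) (hg : QP g) :
    ∀ l u : Fin n → ℚ, ∃ φ', Good (fsum l u Ls g) φ' ∧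
      ∀ x, HasEI (ffun l u Ls (fun _ => g 0) x) (φ' x) := by
  classical
  induction Ls with
  | nil =>
    intro l u
    obtain ⟨G, hG, hs⟩ := hg.antisum
    have h1 := Good.cut (u - l) _ _ (Good.qp _ ((hG.subst_ceil u).sub (hG.subst_floor l)))
    refine ⟨fun x => if evR l x < evR u x then - g 0 else 0, ?_, fun x => ?_⟩
    · convert h1 using 2 with x x
      · simp only [fsum_nil, evZ_sub', sub_pos]
        split_ifs with hlu
        · rw [hs]
          have : ⌊evZ l x⌋ < ⌈evZ u x⌉ := by
            rw [Int.floor_lt]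
            exact hlu.trans_le (Int.le_ceil _)
          omega
        · rw [Finset.Ico_eq_empty, Finset.sum_empty]
          rw [not_lt, Int.ceil_le]
          push Not at hlu
          have := Int.lt_floor_add_one (evZ l x)
          push_cast
          linarith
      · simp only [evR_sub', sub_pos]
        have := hs 0 0 1 (by norm_num)
        have e0 : (Fin.cons 0 0 : Fin (n + 1) → ℤ) = 0 := by
          funext i; refine Fin.cases ?_ (fun i => ?_) i <;> simp
        rw [show Finset.Ico (0 : ℤ) 1 = {0} by rfl, Finset.sum_singleton] at this
        have e1 : ∀ l : Fin n → ℚ, evZ l 0 = 0 := by intro l; simp [evZ]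
        simp only [e1, Int.ceil_zero, Int.floor_zero, zero_add]
        rw [e0] at this ⊢
        rw [this]
        simp
    · have := HasEI.Ioo (evR l x) (evR u x) (g 0)
      convert this using 2 with y
      simp [ffun]
  | cons k Ls ih =>
    intro l u
    rcases lt_trichotomy (k 0) 0 with h0 | h0 | h0
    · -- new upper bound
      set u2 : Fin n → ℚ := (-(k 0)⁻¹) • Fin.tail k with hu2
      obtain ⟨φ1, g1, i1⟩ := ih l u2
      obtain ⟨φ2, g2, i2⟩ := ih l u
      refine ⟨(fun x => if 0 < evR (u - u2) x then φ1 x else φ2 x), ?_, fun x => ?_⟩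
      swap
      · have key : ∀ y, (0 < evR k (Fin.cons y x)) ↔ y < evR u2 x := by
          intro y
          have h0' : (k 0 : ℝ) < 0 := by exact_mod_cast h0
          rw [evR_cons, hu2, evR_smul']
          push_cast
          rw [neg_mul, ← div_eq_inv_mul, ← neg_div, lt_div_iff_of_neg h0']
          constructor <;> intro h <;> linarith
        dsimp only
        simp only [evR_sub', sub_pos]
        split_ifs with hc
        · convert i1 x using 1
          funext y
          unfold ffun
          simp only [List.forall_mem_cons, key]
          congr 1
          apply propext
          constructor
          · rintro ⟨⟨a, b⟩, c, d⟩; exact ⟨⟨a, c⟩, d⟩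
          · rintro ⟨⟨a, b⟩, d⟩; exact ⟨⟨a, b.trans hc⟩, b, d⟩
        · convert i2 x using 1
          funext y
          unfold ffun
          simp only [List.forall_mem_cons, key]
          congr 1
          apply propext
          push Not at hc
          constructor
          · rintro ⟨⟨a, b⟩, c, d⟩; exact ⟨⟨a, b⟩, d⟩
          · rintro ⟨⟨a, b⟩, d⟩; exact ⟨⟨a, b⟩, b.trans_le hc, d⟩
      · convert Good.ite (u - u2) g1 g2 using 2 with x
        have key : ∀ y : ℤ, (0 < evZ k (Fin.cons y x)) ↔ (y : ℚ) < evZ u2 x := by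
          intro y
          rw [evZ_cons, hu2, evZ_smul']
          rw [neg_mul, ← div_eq_inv_mul, ← neg_div, lt_div_iff_of_neg h0]
          constructor <;> intro h <;> linarith
        simp only [evZ_sub', sub_pos]
        split_ifs with hc
        · unfold fsum
          refine finsum_congr (fun y => ?_)
          simp only [List.forall_mem_cons, key]
          congr 1
          apply propext
          constructor
          · rintro ⟨⟨a, b⟩, c, d⟩; exact ⟨⟨a, c⟩, d⟩
          · rintro ⟨⟨a, b⟩, d⟩; exact ⟨⟨a, b.trans hc⟩, b, d⟩
        · unfold fsum
          refine finsum_congr (fun y => ?_)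
          simp only [List.forall_mem_cons, key]
          congr 1
          apply propext
          push Not at hc
          constructor
          · rintro ⟨⟨a, b⟩, c, d⟩; exact ⟨⟨a, b⟩, d⟩
          · rintro ⟨⟨a, b⟩, d⟩; exact ⟨⟨a, b⟩, b.trans_le hc, d⟩
    · obtain ⟨φ2, g2, i2⟩ := ih l u
      refine ⟨fun x => if 0 < evR (Fin.tail k) x then φ2 x else 0, ?_, fun x => ?_⟩
      swap
      · have key : ∀ y, (0 < evR k (Fin.cons y x)) ↔ 0 < evR (Fin.tail k) x := by
          intro y
          simp [evR_cons, h0]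
        dsimp only
        split_ifs with hc
        · convert i2 x using 1
          funext y
          unfold ffun
          simp only [List.forall_mem_cons, key, hc, true_and]
        · convert HasEI.zero using 1
          funext y
          unfold ffun
          simp only [List.forall_mem_cons, key, hc, false_and, and_false, if_false]
      · convert Good.cut (Fin.tail k) _ _ g2 using 2 with x
        have key : ∀ y : ℤ, (0 < evZ k (Fin.cons y x)) ↔ 0 < evZ (Fin.tail k) x := by
          intro y
          simp [evZ_cons, h0]
        split_ifs with hc
        · unfold fsum
          refine finsum_congr (fun y => ?_)
          simp only [List.forall_mem_cons, key, hc, true_and]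
        · unfold fsum
          simp only [List.forall_mem_cons, key, hc, false_and, and_false, if_false, finsum_zero]
    · -- new lower bound
      set l2 : Fin n → ℚ := (-(k 0)⁻¹) • Fin.tail k with hl2
      obtain ⟨φ1, g1, i1⟩ := ih l2 u
      obtain ⟨φ2, g2, i2⟩ := ih l u
      refine ⟨fun x => if 0 < evR (l2 - l) x then φ1 x else φ2 x, ?_, fun x => ?_⟩
      swap
      · have key : ∀ y, (0 < evR k (Fin.cons y x)) ↔ evR l2 x < y := by
          intro y
          have h0' : 0 < (k 0 : ℝ) := by exact_mod_cast h0
          rw [evR_cons, hl2, evR_smul']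
          push_cast
          rw [neg_mul, ← div_eq_inv_mul, ← neg_div, div_lt_iff₀ h0']
          constructor <;> intro h <;> linarith
        dsimp only
        simp only [evR_sub', sub_pos]
        split_ifs with hc
        · convert i1 x using 1
          funext y
          unfold ffun
          simp only [List.forall_mem_cons, key]
          congr 1
          apply propext
          constructor
          · rintro ⟨⟨a, b⟩, c, d⟩; exact ⟨⟨c, b⟩, d⟩
          · rintro ⟨⟨a, b⟩, d⟩; exact ⟨⟨hc.trans a, b⟩, a, d⟩
        · convert i2 x using 1
          funext y
          unfold ffun
          simp only [List.forall_mem_cons, key]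
          congr 1
          apply propext
          push Not at hc
          constructor
          · rintro ⟨⟨a, b⟩, c, d⟩; exact ⟨⟨a, b⟩, d⟩
          · rintro ⟨⟨a, b⟩, d⟩; exact ⟨⟨a, b⟩, hc.trans_lt a, d⟩
      · convert Good.ite (l2 - l) g1 g2 using 2 with x
        have key : ∀ y : ℤ, (0 < evZ k (Fin.cons y x)) ↔ evZ l2 x < (y : ℚ) := by
          intro y
          rw [evZ_cons, hl2, evZ_smul']
          rw [neg_mul, ← div_eq_inv_mul, ← neg_div, div_lt_iff₀ h0]
          constructor <;> intro h <;> linarith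
        simp only [evZ_sub', sub_pos]
        split_ifs with hc
        · unfold fsum
          refine finsum_congr (fun y => ?_)
          simp only [List.forall_mem_cons, key]
          congr 1
          apply propext
          constructor
          · rintro ⟨⟨a, b⟩, c, d⟩; exact ⟨⟨c, b⟩, d⟩
          · rintro ⟨⟨a, b⟩, d⟩; exact ⟨⟨hc.trans a, b⟩, a, d⟩
        · unfold fsum
          refine finsum_congr (fun y => ?_)
          simp only [List.forall_mem_cons, key]
          congr 1
          apply propext
          push Not at hc
          constructor
          · rintro ⟨⟨a, b⟩, c, d⟩; exact ⟨⟨a, b⟩, d⟩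
          · rintro ⟨⟨a, b⟩, d⟩; exact ⟨⟨a, b⟩, hc.trans_lt a, d⟩

theorem step {n : ℕ} {h : (Fin (n + 1) → ℤ) → ℚ} {φ : (Fin (n + 1) → ℝ) → ℚ} (H : Good h φ)
    (l u : Fin n → ℚ) : ∀ Ls : List (Fin (n + 1) → ℚ), ∃ φ', Good (fsum l u Ls h) φ' ∧
      ∀ x, HasEI (ffun l u Ls φ x) (φ' x) := by
  classical
  induction H with
  | qp g hg => exact fun Ls => step_qp Ls g hg l u
  | add h h' φ φ' _ _ i1 i2 =>
    intro Ls
    obtain ⟨φ1, g1, e1⟩ := i1 Ls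
    obtain ⟨φ2, g2, e2⟩ := i2 Ls
    refine ⟨fun x => φ1 x + φ2 x, ?_, fun x => ?_⟩
    · convert Good.add _ _ _ _ g1 g2 using 2 with x
      exact fsum_add _ _ _ _ _ _
    · rw [ffun_add]
      exact (e1 x).add (e2 x)
  | cut k h φ _ i =>
    intro Ls
    obtain ⟨φ1, g1, e1⟩ := i (k :: Ls)
    refine ⟨φ1, ?_, fun x => ?_⟩
    · convert g1 using 1
      funext x
      unfold fsum
      refine finsum_congr (fun y => ?_)
      simp only [List.forall_mem_cons]
      rw [← ite_and]
      congr 1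
      apply propext
      tauto
    · convert e1 x using 1
      funext y
      unfold ffun
      simp only [List.forall_mem_cons]
      rw [← ite_and]
      congr 1
      apply propext
      tauto

theorem evR_one {l : Fin 1 → ℚ} {x : Fin 1 → ℝ} : evR l x = l 0 * x 0 := by
  simp [evR]

theorem evZ_one {l : Fin 1 → ℚ} {x : Fin 1 → ℤ} : evZ l x = l 0 * x 0 := by
  simp [evZ]

theorem Good.one_var {h : (Fin 1 → ℤ) → ℚ} {φ : (Fin 1 → ℝ) → ℚ} (H : Good h φ) :
    ∃ N : ℕ, 0 < N ∧ ∃ P : Polynomial ℚ,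
      (∀ k : ℤ, 0 < k → h (fun _ => N * k) = P.eval (k : ℚ)) ∧
      ∀ x : Fin 1 → ℝ, 0 < x 0 → φ x = P.eval 0 := by
  induction H with
  | qp g hg =>
    obtain ⟨N, hN, P, hP⟩ := hg.one_var
    refine ⟨N, hN, P, fun k _ => hP k, fun x _ => ?_⟩
    have := hP 0
    simp only [mul_zero, Int.cast_zero] at this
    exact this
  | add f g φ φ' _ _ h1 h2 =>
    obtain ⟨N1, p1, P1, e1, z1⟩ := h1
    obtain ⟨N2, p2, P2, e2, z2⟩ := h2
    refine ⟨N1 * N2, Nat.mul_pos p1 p2, P1.comp (Polynomial.C (N2 : ℚ) * Polynomial.X) +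
      P2.comp (Polynomial.C (N1 : ℚ) * Polynomial.X), fun k hk => ?_, fun x hx => ?_⟩
    · have a1 := e1 (N2 * k) (by positivity)
      have a2 := e2 (N1 * k) (by positivity)
      rw [← mul_assoc] at a1 a2
      rw [mul_comm (N2 : ℤ)] at a2
      push_cast at *
      simp [a1, a2]
    · simp [z1 x hx, z2 x hx]
  | cut l h φ _ i =>
    obtain ⟨N, p, P, e, z⟩ := i
    by_cases hl : 0 < l 0
    · refine ⟨N, p, P, fun k hk => ?_, fun x hx => ?_⟩
      · beta_reduce
        rw [if_pos, e k hk]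
        rw [evZ_one]
        have : (0 : ℚ) < ((N * k : ℤ) : ℚ) := by
          exact_mod_cast (by positivity : (0 : ℤ) < N * k)
        positivity
      · beta_reduce
        rw [if_pos, z x hx]
        rw [evR_one]
        have : (0 : ℝ) < l 0 := by exact_mod_cast hl
        positivity
    · refine ⟨N, p, 0, fun k hk => ?_, fun x hx => ?_⟩
      · beta_reduce
        rw [if_neg]
        · simp
        rw [evZ_one, not_lt]
        have : (0 : ℚ) < ((N * k : ℤ) : ℚ) := by
          exact_mod_cast (by positivity : (0 : ℤ) < N * k)
        push Not at hl
        exact mul_nonpos_of_nonpos_of_nonneg hl this.le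
      · beta_reduce
        rw [if_neg]
        · simp
        rw [evR_one, not_lt]
        push Not at hl
        have : (l 0 : ℝ) ≤ 0 := by exact_mod_cast hl
        exact mul_nonpos_of_nonpos_of_nonneg this hx.le

/-- the box at height `T` -/
noncomputable def box (K : ℕ) (T : ℤ) : (n : ℕ) → Finset (Fin (n + 1) → ℤ)
  | 0 => {fun _ => T}
  | n + 1 => (box K T n ×ˢ Finset.Ioo (-(K * T)) (K * T)).image
      (fun p => (Fin.cons p.2 p.1 : Fin (n + 2) → ℤ))

theorem mem_box (K : ℕ) (T : ℤ) (n : ℕ) (x : Fin (n + 1) → ℤ) :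
    x ∈ box K T n ↔ x (Fin.last n) = T ∧ ∀ i : Fin n, -(K * T) < x i.castSucc ∧
      x i.castSucc < K * T := by
  induction n with
  | zero =>
    simp only [box, Finset.mem_singleton]
    constructor
    · rintro rfl; simp
    · rintro ⟨h, -⟩
      funext i
      rw [← h]
      congr 1
      omega
  | succ n ih =>
    simp only [box, Finset.mem_image, Finset.mem_product, Prod.exists, Finset.mem_Ioo]
    constructor
    · rintro ⟨a, b, ⟨ha, hb⟩, rfl⟩
      rw [ih] at ha
      refine ⟨?_, fun i => ?_⟩
      · rw [← Fin.succ_last, Fin.cons_succ]; exact ha.1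
      · refine Fin.cases ?_ (fun i => ?_) i
        · simpa using hb
        · rw [← Fin.succ_castSucc, Fin.cons_succ]; exact ha.2 i
    · rintro ⟨h1, h2⟩
      refine ⟨Fin.tail x, x 0, ⟨?_, h2 0⟩, Fin.cons_self_tail x⟩
      rw [ih]
      refine ⟨?_, fun i => ?_⟩
      · rw [← Fin.succ_last] at h1; exact h1
      · have := h2 i.succ
        rw [← Fin.succ_castSucc] at this
        exact this

theorem sum_box_succ (K : ℕ) (T : ℤ) (n : ℕ) (h : (Fin (n + 2) → ℤ) → ℚ) :
    ∑ x ∈ box K T (n + 1), h x =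
      ∑ x ∈ box K T n, ∑ y ∈ Finset.Ioo (-(K * T)) (K * T), h (Fin.cons y x) := by
  simp only [box]
  rw [Finset.sum_image, Finset.sum_product]
  rintro ⟨a, b⟩ _ ⟨c, d⟩ _ h
  have := Fin.cons_injective2 h
  simp only [Prod.mk.injEq]
  exact ⟨this.2, this.1⟩

theorem open_convex_eq_Ioo (s : Set ℝ) (ho : IsOpen s) (hc : Convex ℝ s) (hne : s.Nonempty)
    (hb : BddBelow s) (ha : BddAbove s) : ∃ a b, a < b ∧ s = Set.Ioo a b := by
  have hsub : s = Set.Ioo (sInf s) (sSup s) := by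
    apply Set.Subset.antisymm
    · intro y hy
      obtain ⟨ε, hε, hball⟩ := Metric.isOpen_iff.mp ho y hy
      have h1 : y - ε / 2 ∈ s := hball (by
        rw [Metric.mem_ball, Real.dist_eq, abs_lt]; constructor <;> linarith)
      have h2 : y + ε / 2 ∈ s := hball (by
        rw [Metric.mem_ball, Real.dist_eq, abs_lt]; constructor <;> linarith)
      have := csInf_le hb h1
      have := le_csSup ha h2
      constructor <;> linarith
    · exact IsConnected.Ioo_csInf_csSup_subset ⟨hne, hc.isPreconnected⟩ hb ha
  obtain ⟨y, hy⟩ := hne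
  rw [hsub] at hy
  exact ⟨_, _, hy.1.trans hy.2, hsub⟩

open Classical in
theorem ehrhart (K : ℕ) (n : ℕ) : ∀ (h : (Fin (n + 1) → ℤ) → ℚ) (φ : (Fin (n + 1) → ℝ) → ℚ)
    (_ : Good h φ) (c : ℚ) (C : Set (Fin (n + 1) → ℝ)) (_ : IsOpen C) (_ : Convex ℝ C)
    (_ : C.Nonempty) (_ : ∀ x ∈ C, 0 < x (Fin.last n))
    (_ : ∀ x ∈ C, ∀ i : Fin n, |x i.castSucc| < K * x (Fin.last n))
    (_ : ∀ x, φ x = if x ∈ C then c else 0),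
    ∃ N : ℕ, 0 < N ∧ ∃ P : Polynomial ℚ,
      (∀ k : ℤ, 0 < k → ∑ x ∈ box K (N * k) n, h x = P.eval (k : ℚ)) ∧
      P.eval 0 = (-1) ^ n * c := by
  induction n with
  | zero =>
    intro h φ H c C ho hc hne hpos hbox hφ
    obtain ⟨N, hN, P, hP, hz⟩ := H.one_var
    refine ⟨N, hN, P, fun k hk => ?_, ?_⟩
    · simp only [box, Finset.sum_singleton]
      exact hP k hk
    · obtain ⟨x, hx⟩ := hne
      rw [← hz x (hpos x hx), hφ, if_pos hx]
      simp
  | succ n ih =>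
    intro h φ H c C ho hc hne hpos hbox hφ
    set u : Fin (n + 1) → ℚ := Pi.single (Fin.last n) (K : ℚ) with hu
    have uZ : ∀ x : Fin (n + 1) → ℤ, evZ u x = K * x (Fin.last n) := by
      intro x
      simp only [evZ, hu]
      rw [Finset.sum_eq_single (Fin.last n)]
      · simp
      · intro b _ hb; simp [hb]
      · simp
    have uR : ∀ x : Fin (n + 1) → ℝ, evR u x = K * x (Fin.last n) := by
      intro x
      simp only [evR, hu]
      rw [Finset.sum_eq_single (Fin.last n)]
      · simp
      · intro b _ hb; simp [hb]
      · simp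
    have nZ : ∀ x : Fin (n + 1) → ℤ, evZ (-u) x = -(K * x (Fin.last n)) := by
      intro x; rw [← uZ]; simp [evZ]
    have nR : ∀ x : Fin (n + 1) → ℝ, evR (-u) x = -(K * x (Fin.last n)) := by
      intro x; rw [← uR]; simp [evR]
    obtain ⟨φ', H', hEI⟩ := step H (-u) u []
    have hlast : ∀ (y : ℝ) (x : Fin (n + 1) → ℝ),
        (Fin.cons y x : Fin (n + 2) → ℝ) (Fin.last (n + 1)) = x (Fin.last n) := by
      intro y x; rw [← Fin.succ_last, Fin.cons_succ]
    have hcs : ∀ (y : ℝ) (x : Fin (n + 1) → ℝ) (i : Fin n),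
        (Fin.cons y x : Fin (n + 2) → ℝ) i.succ.castSucc = x i.castSucc := by
      intro y x i; rw [← Fin.succ_castSucc, Fin.cons_succ]
    set C' : Set (Fin (n + 1) → ℝ) := {x | ∃ y : ℝ, (Fin.cons y x : Fin (n + 2) → ℝ) ∈ C} with hC'
    have hcomb : ∀ (a b y y' : ℝ) (x x' : Fin (n + 1) → ℝ),
        (Fin.cons (a * y + b * y') (a • x + b • x') : Fin (n + 2) → ℝ) =
          a • Fin.cons y x + b • Fin.cons y' x' := by
      intro a b y y' x x'
      funext i
      refine Fin.cases ?_ (fun i => ?_) i <;> simp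
    have key := ih _ φ' H' (-c) C'
    refine (fun h1 h2 h3 h4 h5 h6 => ?_ : IsOpen C' → Convex ℝ C' → C'.Nonempty →
      (∀ x ∈ C', 0 < x (Fin.last n)) →
      (∀ x ∈ C', ∀ i : Fin n, |x i.castSucc| < K * x (Fin.last n)) →
      (∀ x, φ' x = if x ∈ C' then (-c) else 0) → _) ?_ ?_ ?_ ?_ ?_ ?_
    · obtain ⟨N, hN, P, hP, hP0⟩ := key h1 h2 h3 h4 h5 h6
      refine ⟨N, hN, P, fun k hk => ?_, ?_⟩
      · rw [← hP k hk, sum_box_succ]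
        refine Finset.sum_congr rfl (fun x hx => ?_)
        rw [mem_box] at hx
        rw [fsum_nil, uZ, nZ, hx.1]
        refine Finset.sum_congr ?_ (fun _ _ => rfl)
        ext y
        simp only [Finset.mem_Ioo, Finset.mem_Ico, Int.add_one_le_iff, Int.floor_lt, Int.lt_ceil]
        norm_cast
      · rw [hP0]; ring
    · have : C' = ⋃ y : ℝ, (fun x : Fin (n + 1) → ℝ => (Fin.cons y x : Fin (n + 2) → ℝ)) ⁻¹' C := by
        ext x; simp [hC']
      rw [this]
      refine isOpen_iUnion (fun y => ho.preimage ?_)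
      refine continuous_pi (fun i => ?_)
      refine Fin.cases ?_ (fun i => ?_) i
      · simpa using continuous_const
      · simpa using continuous_apply i
    · rintro x ⟨y, hy⟩ x' ⟨y', hy'⟩ a b ha hb hab
      refine ⟨a * y + b * y', ?_⟩
      rw [hcomb]
      exact hc hy hy' ha hb hab
    · obtain ⟨x, hx⟩ := hne
      exact ⟨Fin.tail x, x 0, by rwa [Fin.cons_self_tail]⟩
    · rintro x ⟨y, hy⟩
      have := hpos _ hy
      rwa [hlast] at this
    · rintro x ⟨y, hy⟩ i
      have := hbox _ hy i.succ
      rwa [hlast, hcs] at this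
    · intro x
      refine (hEI x).unique ?_
      have hff : ffun (-u) u [] φ x = fun y => if (Fin.cons y x : Fin (n + 2) → ℝ) ∈ C
          then c else 0 := by
        funext y
        unfold ffun
        rw [hφ, uR, nR]
        by_cases hy : (Fin.cons y x : Fin (n + 2) → ℝ) ∈ C
        · have := hbox _ hy 0
          rw [hlast] at this
          simp only [Fin.castSucc_zero, Fin.cons_zero, abs_lt] at this
          simp [hy, this.1, this.2]
        · simp [hy]
      rw [hff]
      by_cases hx : x ∈ C'
      · rw [if_pos hx]
        have key2 : ∃ a b, a < b ∧ {y : ℝ | (Fin.cons y x : Fin (n + 2) → ℝ) ∈ C} = Set.Ioo a b := by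
          refine open_convex_eq_Ioo _ ?_ ?_ hx ?_ ?_
          · refine ho.preimage (f := fun y : ℝ => (Fin.cons y x : Fin (n + 2) → ℝ)) ?_
            refine continuous_pi (fun i => ?_)
            refine Fin.cases ?_ (fun i => ?_) i
            · exact continuous_id
            · simpa using continuous_const
          · intro y hy y' hy' a b ha hb hab
            have := hc hy hy' ha hb hab
            rw [← hcomb, ← add_smul, hab, one_smul] at this
            exact this
          · refine ⟨-(K * x (Fin.last n)), fun y hy => ?_⟩
            have := hbox _ hy 0
            rw [hlast] at this
            simp only [Fin.castSucc_zero, Fin.cons_zero, abs_lt] at this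
            exact this.1.le
          · refine ⟨(K * x (Fin.last n)), fun y hy => ?_⟩
            have := hbox _ hy 0
            rw [hlast] at this
            simp only [Fin.castSucc_zero, Fin.cons_zero, abs_lt] at this
            exact this.2.le
        · obtain ⟨a, b, hab, hs⟩ := key2
          have e : ∀ y : ℝ, (Fin.cons y x : Fin (n + 2) → ℝ) ∈ C ↔ a < y ∧ y < b := by
            intro y
            have : y ∈ {y : ℝ | (Fin.cons y x : Fin (n + 2) → ℝ) ∈ C} ↔ y ∈ Set.Ioo a b := by
              rw [hs]
            exact this
          simp only [e]
          have := HasEI.Ioo a b c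
          rwa [if_pos hab] at this
      · rw [if_neg hx]
        convert HasEI.zero using 1
        funext y
        rw [if_neg (fun h => hx ⟨y, h⟩)]

open Classical in
/-- sets whose indicator is good -/
def GoodSet {n : ℕ} (C : Set (Fin n → ℝ)) : Prop :=
  Good (fun x : Fin n → ℤ => if (fun i => (x i : ℝ)) ∈ C then 1 else 0)
    (fun x => if x ∈ C then 1 else 0)

theorem GoodSet.half {n : ℕ} (l : Fin n → ℚ) : GoodSet {x | 0 < evR l x} := by
  have := Good.cut l _ _ (Good.qp _ (QP.const 1))
  unfold GoodSet
  simp only [Set.mem_ofPred_eq, evR_cast, Rat.cast_pos]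
  convert this using 2

theorem GoodSet.inter {n : ℕ} {C D : Set (Fin n → ℝ)} (hC : GoodSet C) (hD : GoodSet D) :
    GoodSet (C ∩ D) := by
  classical
  have := Good.mul hC hD
  unfold GoodSet
  convert this using 2
  · simp only [Set.mem_inter_iff]
    split_ifs <;> simp_all
  · simp only [Set.mem_inter_iff]
    split_ifs <;> simp_all

theorem GoodSet.univ {n : ℕ} : GoodSet (Set.univ : Set (Fin n → ℝ)) := by
  have := Good.qp (n := n) _ (QP.const 1)
  unfold GoodSet
  simpa using this

theorem GoodSet.compl {n : ℕ} {C : Set (Fin n → ℝ)} (hC : GoodSet C) : GoodSet Cᶜ := by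
  classical
  have := Good.sub (Good.qp (n := n) _ (QP.const 1)) hC
  unfold GoodSet
  convert this using 2
  · simp only [Set.mem_compl_iff]
    split_ifs <;> simp_all
  · simp only [Set.mem_compl_iff]
    split_ifs <;> simp_all

theorem GoodSet.all {n : ℕ} {ι : Type*} (s : Finset ι) (F : ι → Set (Fin n → ℝ))
    (h : ∀ i ∈ s, GoodSet (F i)) : GoodSet {x | ∀ i ∈ s, x ∈ F i} := by
  classical
  induction s using Finset.induction_on with
  | empty => simpa using GoodSet.univ
  | insert a s ha ih =>
    have := (h a (by simp)).inter (ih (fun i hi => h i (by simp [hi])))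
    convert this using 1
    ext x
    simp

theorem GoodSet.ex {n : ℕ} {ι : Type*} (s : Finset ι) (F : ι → Set (Fin n → ℝ))
    (h : ∀ i ∈ s, GoodSet (F i)) : GoodSet {x | ∃ i ∈ s, x ∈ F i} := by
  have := (GoodSet.all s (fun i => (F i)ᶜ) (fun i hi => (h i hi).compl)).compl
  convert this using 1
  ext x
  simp

/-- rational linear functionals -/
def RatLin {n : ℕ} (L : (Fin n → ℝ) → ℝ) : Prop := ∃ l : Fin n → ℚ, ∀ x, L x = evR l x

theorem RatLin.coord {n : ℕ} (i : Fin n) : RatLin (fun x => x i) := by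
  refine ⟨Pi.single i 1, fun x => ?_⟩
  simp only [evR]
  rw [Finset.sum_eq_single i]
  · simp
  · intro b _ hb; simp [hb]
  · simp

theorem RatLin.sub {n : ℕ} {L L' : (Fin n → ℝ) → ℝ} (h : RatLin L) (h' : RatLin L') :
    RatLin (fun x => L x - L' x) := by
  obtain ⟨l, hl⟩ := h
  obtain ⟨l', hl'⟩ := h'
  exact ⟨l - l', fun x => by simp only [hl, hl', evR_sub']⟩

theorem RatLin.smul {n : ℕ} (a : ℚ) {L : (Fin n → ℝ) → ℝ} (h : RatLin L) :
    RatLin (fun x => (a : ℝ) * L x) := by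
  obtain ⟨l, hl⟩ := h
  exact ⟨a • l, fun x => by simp only [hl, evR_smul']⟩

theorem RatLin.good {n : ℕ} {L : (Fin n → ℝ) → ℝ} (h : RatLin L) : GoodSet {x | 0 < L x} := by
  obtain ⟨l, hl⟩ := h
  simp only [hl]
  exact GoodSet.half l

theorem polygon_aux (V : Finset (ℝ × ℝ)) (x a b : ℝ × ℝ) (ha : a ∈ V) (hb : b ∈ V) (hab : a ≠ b)
    (α β : ℝ) (hne : α ≠ 0 ∨ β ≠ 0) (heq : α * a.1 + β * a.2 = α * b.1 + β * b.2)
    (hs : ∀ s ∈ V, α * s.1 + β * s.2 ≤ α * x.1 + β * x.2) :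
    ∃ a ∈ V, ∃ b ∈ V, a ≠ b ∧
      ∀ s ∈ V, (b.1 - a.1) * (s.2 - x.2) - (b.2 - a.2) * (s.1 - x.1) ≤ 0 := by
  set d1 := b.1 - a.1 with hd1
  set d2 := b.2 - a.2 with hd2
  have hd : 0 < d1 ^ 2 + d2 ^ 2 := by
    by_contra h
    apply hab
    have h1 : d1 = 0 := by nlinarith [sq_nonneg d1, sq_nonneg d2]
    have h2 : d2 = 0 := by nlinarith [sq_nonneg d1, sq_nonneg d2]
    ext
    · linarith
    · linarith
  have hab0 : 0 < α ^ 2 + β ^ 2 := by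
    rcases hne with h | h <;> positivity
  have h0 : α * d1 + β * d2 = 0 := by rw [hd1, hd2]; linarith
  set lam := β * d1 - α * d2 with hlam
  have key : ∀ w1 w2 : ℝ, (α * w1 + β * w2) * (d1 ^ 2 + d2 ^ 2) = lam * (d1 * w2 - d2 * w1) := by
    intro w1 w2
    rw [hlam]
    linear_combination (w1 * d1 + w2 * d2) * h0
  have hl2 : lam ^ 2 = (α ^ 2 + β ^ 2) * (d1 ^ 2 + d2 ^ 2) := by
    rw [hlam]
    linear_combination (-(α * d1 + β * d2)) * h0
  have hl0 : lam ≠ 0 := by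
    intro h
    rw [h] at hl2
    nlinarith [mul_pos hab0 hd]
  rcases lt_or_gt_of_ne hl0 with h | h
  · refine ⟨b, hb, a, ha, hab.symm, fun s hsV => ?_⟩
    have h1 := key (s.1 - x.1) (s.2 - x.2)
    have h2 : α * (s.1 - x.1) + β * (s.2 - x.2) ≤ 0 := by linarith [hs s hsV]
    have h3 : lam * (d1 * (s.2 - x.2) - d2 * (s.1 - x.1)) ≤ 0 := by
      rw [← h1]; exact mul_nonpos_of_nonpos_of_nonneg h2 hd.le
    have h4 : 0 ≤ d1 * (s.2 - x.2) - d2 * (s.1 - x.1) := by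
      by_contra h5
      push Not at h5
      nlinarith [mul_pos_of_neg_of_neg h h5]
    rw [hd1, hd2] at h4
    linarith
  · refine ⟨a, ha, b, hb, hab, fun s hsV => ?_⟩
    have h1 := key (s.1 - x.1) (s.2 - x.2)
    have h2 : α * (s.1 - x.1) + β * (s.2 - x.2) ≤ 0 := by linarith [hs s hsV]
    have h3 : lam * (d1 * (s.2 - x.2) - d2 * (s.1 - x.1)) ≤ 0 := by
      rw [← h1]; exact mul_nonpos_of_nonpos_of_nonneg h2 hd.le
    by_contra h5
    push Not at h5
    nlinarith [mul_pos h h5]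

theorem clm_apply (f : ℝ × ℝ →L[ℝ] ℝ) (v : ℝ × ℝ) :
    f v = f (1, 0) * v.1 + f (0, 1) * v.2 := by
  have : v = v.1 • ((1, 0) : ℝ × ℝ) + v.2 • ((0, 1) : ℝ × ℝ) := by ext <;> simp
  conv_lhs => rw [this]
  rw [map_add, map_smul, map_smul]
  simp only [smul_eq_mul]
  ring

theorem mem_interior_polygon (V : Finset (ℝ × ℝ))
    (hint : (interior (convexHull ℝ (V : Set (ℝ × ℝ)))).Nonempty) (x : ℝ × ℝ) :
    x ∈ interior (convexHull ℝ (V : Set (ℝ × ℝ))) ↔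
      ∀ a ∈ V, ∀ b ∈ V, a ≠ b →
        ∃ s ∈ V, 0 < (b.1 - a.1) * (s.2 - x.2) - (b.2 - a.2) * (s.1 - x.1) := by
  constructor
  · intro hx a ha b hb hab
    by_contra hcon
    push Not at hcon
    have hB : ∀ y ∈ convexHull ℝ (V : Set (ℝ × ℝ)),
        (b.1 - a.1) * (y.2 - x.2) - (b.2 - a.2) * (y.1 - x.1) ≤ 0 := by
      have hconv : Convex ℝ {y : ℝ × ℝ |
          (b.1 - a.1) * (y.2 - x.2) - (b.2 - a.2) * (y.1 - x.1) ≤ 0} := by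
        intro y hy z hz s t hs ht hst
        simp only [Set.mem_ofPred_eq] at hy hz ⊢
        simp only [Prod.fst_add, Prod.snd_add, Prod.smul_fst, Prod.smul_snd, smul_eq_mul]
        have e : (b.1 - a.1) * (s * y.2 + t * z.2 - x.2) - (b.2 - a.2) * (s * y.1 + t * z.1 - x.1)
          = s * ((b.1 - a.1) * (y.2 - x.2) - (b.2 - a.2) * (y.1 - x.1)) +
            t * ((b.1 - a.1) * (z.2 - x.2) - (b.2 - a.2) * (z.1 - x.1)) := by
          have : s = 1 - t := by linarith
          subst this
          ring
        rw [e]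
        nlinarith [mul_nonneg hs (neg_nonneg.mpr hy), mul_nonneg ht (neg_nonneg.mpr hz)]
      exact fun y hy => convexHull_min (fun v hv => hcon v hv) hconv hy
    have hcont : Filter.Tendsto (fun ε : ℝ => ((x.1 - ε * (b.2 - a.2), x.2 + ε * (b.1 - a.1)) : ℝ × ℝ))
        (nhdsWithin 0 (Set.Ioi 0)) (nhds x) := by
      have : Continuous (fun ε : ℝ => ((x.1 - ε * (b.2 - a.2), x.2 + ε * (b.1 - a.1)) : ℝ × ℝ)) := by
        fun_prop
      have h := (this.tendsto 0).mono_left (nhdsWithin_le_nhds (s := Set.Ioi 0))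
      simpa using h
    have hev := hcont.eventually (mem_interior_iff_mem_nhds.mp hx)
    obtain ⟨ε, h1, h2⟩ := (hev.and self_mem_nhdsWithin).exists
    have h3 := hB _ h1
    replace h2 : 0 < ε := h2
    have hd : 0 < (b.1 - a.1) ^ 2 + (b.2 - a.2) ^ 2 := by
      by_contra h
      apply hab
      have e1 : b.1 - a.1 = 0 := by nlinarith [sq_nonneg (b.1 - a.1), sq_nonneg (b.2 - a.2)]
      have e2 : b.2 - a.2 = 0 := by nlinarith [sq_nonneg (b.1 - a.1), sq_nonneg (b.2 - a.2)]
      ext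
      · linarith
      · linarith
    have h4 := mul_pos h2 hd
    dsimp only at h3
    nlinarith
  · intro hall
    by_contra hx
    have hopen : IsOpen (interior (convexHull ℝ (V : Set (ℝ × ℝ)))) := isOpen_interior
    have hconv : Convex ℝ (convexHull ℝ (V : Set (ℝ × ℝ))) := convex_convexHull ℝ _
    obtain ⟨f, hf⟩ := geometric_hahn_banach_open_point hconv.interior hopen hx
    have hfV : ∀ s ∈ V, f s ≤ f x := by
      intro s hs
      have h1 : s ∈ closure (interior (convexHull ℝ (V : Set (ℝ × ℝ)))) := by
        rw [hconv.closure_interior_eq_closure_of_nonempty_interior hint]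
        exact subset_closure (subset_convexHull ℝ _ hs)
      have h2 : closure (interior (convexHull ℝ (V : Set (ℝ × ℝ)))) ⊆ {y | f y ≤ f x} :=
        closure_minimal (fun y hy => (hf y hy).le) (isClosed_le f.continuous continuous_const)
      exact h2 h1
    have hVne : V.Nonempty := by
      rw [Finset.nonempty_iff_ne_empty]
      rintro rfl
      simp at hint
    obtain ⟨a, ha, hamax⟩ := Finset.exists_max_image V f hVne
    set α := f (1, 0) with hα
    set β := f (0, 1) with hβ
    have hfe : ∀ v, f v = α * v.1 + β * v.2 := clm_apply f
    have hne : α ≠ 0 ∨ β ≠ 0 := by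
      by_contra h
      push Not at h
      obtain ⟨y, hy⟩ := hint
      have := hf y hy
      rw [hfe, hfe, h.1, h.2] at this
      simp at this
    have fin : ¬ ∃ a ∈ V, ∃ b ∈ V, a ≠ b ∧
      ∀ s ∈ V, (b.1 - a.1) * (s.2 - x.2) - (b.2 - a.2) * (s.1 - x.1) ≤ 0 := by
      rintro ⟨a, ha, b, hb, hab, h⟩
      obtain ⟨s, hs, h'⟩ := hall a ha b hb hab
      linarith [h s hs]
    apply fin
    by_cases hcase : ∃ e ∈ V, e ≠ a ∧ f e = f a
    · obtain ⟨e, he, hea, hfea⟩ := hcase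
      refine polygon_aux V x a e ha he hea.symm α β hne ?_ ?_
      · rw [← hfe, ← hfe, hfea]
      · intro s hs
        rw [← hfe, ← hfe]
        exact hfV s hs
    · push Not at hcase
      have hlt : ∀ e ∈ V.erase a, 0 < f a - f e := by
        intro e he
        rw [Finset.mem_erase] at he
        have := lt_of_le_of_ne (hamax e he.2) (hcase e he.2 he.1)
        linarith
      have hWne : (V.erase a).Nonempty := by
        rw [Finset.nonempty_iff_ne_empty]
        intro h
        have : V = {a} := by
          rw [Finset.erase_eq_empty_iff] at h
          rcases h with h | h
          · rw [h] at ha; simp at ha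
          · exact h
        rw [this] at hint
        simp at hint
      set γ : ℝ × ℝ → ℝ := fun e => (-β * (e.1 - a.1) + α * (e.2 - a.2)) / (f a - f e) with hγ
      obtain ⟨b, hb, hbmax⟩ := Finset.exists_max_image (V.erase a) γ hWne
      obtain ⟨c, hc, hcmin⟩ := Finset.exists_min_image (V.erase a) γ hWne
      have hγe : ∀ e ∈ V.erase a, -β * (e.1 - a.1) + α * (e.2 - a.2) =
          γ e * (f a - f e) := by
        intro e he
        have := hlt e he
        rw [hγ]
        field_simp
      have hnn : 0 < α ^ 2 + β ^ 2 := by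
        rcases hne with h | h <;> positivity
      have hbb := hγe b hb
      have hcc := hγe c hc
      have hbV := Finset.mem_erase.mp hb
      have hcV := Finset.mem_erase.mp hc
      by_cases hsgn : 0 ≤ (γ b * α - β) * (x.1 - a.1) + (γ b * β + α) * (x.2 - a.2)
      · refine polygon_aux V x a b ha hbV.2 (Ne.symm hbV.1) (γ b * α - β) (γ b * β + α) ?_ ?_ ?_
        · by_contra h
          push Not at h
          nlinarith [congrArg (fun t => β * t) h.1, congrArg (fun t => α * t) h.2]
        · rw [hfe, hfe] at hbb
          linarith
        · intro s hs
          by_cases hsa : s = a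
          · rw [hsa]; linarith
          · have hse : s ∈ V.erase a := Finset.mem_erase.mpr ⟨hsa, hs⟩
            have h1 := hγe s hse
            have h2 := mul_le_mul_of_nonneg_right (hbmax s hse) (hlt s hse).le
            rw [← h1, hfe, hfe] at h2
            linarith
      · have hmono := hbmax c hc
        have hxa : 0 ≤ f x - f a := by linarith [hfV a ha]
        have h0 := mul_nonneg (sub_nonneg.mpr hmono) hxa
        rw [hfe, hfe] at h0
        refine polygon_aux V x a c ha hcV.2 (Ne.symm hcV.1) (-(γ c * α - β)) (-(γ c * β + α)) ?_ ?_ ?_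
        · by_contra h
          push Not at h
          nlinarith [congrArg (fun t => β * t) h.1, congrArg (fun t => α * t) h.2]
        · rw [hfe, hfe] at hcc
          linarith
        · intro s hs
          by_cases hsa : s = a
          · rw [hsa]; linarith
          · have hse : s ∈ V.erase a := Finset.mem_erase.mpr ⟨hsa, hs⟩
            have h1 := hγe s hse
            have h2 := mul_le_mul_of_nonneg_right (hcmin s hse) (hlt s hse).le
            rw [← h1, hfe, hfe] at h2
            linarith

/-- the scaled configuration -/
noncomputable def sc {q : ℕ} (T : ℕ) (z : Fin q → ℤ × ℤ) : Fin q → ℝ × ℝ :=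
  fun i => (((z i).1 : ℝ) / T, ((z i).2 : ℝ) / T)

/-- Ehrhart property: count of lattice points is polynomial with value `c` at zero -/
def Ehr {q : ℕ} (R : Set (Fin q → ℝ × ℝ)) (c : ℚ) : Prop :=
  ∃ N : ℕ, 0 < N ∧ ∃ P : Polynomial ℚ, P.eval 0 = c ∧ ∀ k : ℕ, 0 < k →
    {z : Fin q → ℤ × ℤ | sc (N * k) z ∈ R}.Finite ∧
    (Set.ncard {z : Fin q → ℤ × ℤ | sc (N * k) z ∈ R} : ℚ) = P.eval (k : ℚ)

theorem Ehr.empty {q : ℕ} : Ehr (∅ : Set (Fin q → ℝ × ℝ)) 0 :=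
  ⟨1, one_pos, 0, by simp, fun k _ => by simp⟩

theorem Ehr.union {q : ℕ} {R R' : Set (Fin q → ℝ × ℝ)} {c c' : ℚ} (h : Ehr R c) (h' : Ehr R' c')
    (hd : Disjoint R R') : Ehr (R ∪ R') (c + c') := by
  obtain ⟨N1, p1, P1, z1, e1⟩ := h
  obtain ⟨N2, p2, P2, z2, e2⟩ := h'
  refine ⟨N1 * N2, Nat.mul_pos p1 p2, P1.comp (Polynomial.C (N2 : ℚ) * Polynomial.X) +
      P2.comp (Polynomial.C (N1 : ℚ) * Polynomial.X), by simp [z1, z2], fun k hk => ?_⟩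
  obtain ⟨f1, a1⟩ := e1 (N2 * k) (by positivity)
  obtain ⟨f2, a2⟩ := e2 (N1 * k) (by positivity)
  rw [← mul_assoc] at f1 f2 a1 a2
  rw [mul_comm N2] at f2 a2
  have hu : {z : Fin q → ℤ × ℤ | sc (N1 * N2 * k) z ∈ R ∪ R'} =
      {z : Fin q → ℤ × ℤ | sc (N1 * N2 * k) z ∈ R} ∪
      {z : Fin q → ℤ × ℤ | sc (N1 * N2 * k) z ∈ R'} := by
    ext z; simp
  rw [hu]
  refine ⟨f1.union f2, ?_⟩
  rw [Set.ncard_union_eq _ f1 f2]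
  · push_cast at *
    rw [a1, a2]
    simp
  · rw [Set.disjoint_left] at hd ⊢
    intro z h1 h2
    exact hd h1 h2

theorem Ehr.sUnion {q : ℕ} (S : Finset (Set (Fin q → ℝ × ℝ))) (h : ∀ R ∈ S, Ehr R 1)
    (hd : ∀ R ∈ S, ∀ R' ∈ S, R ≠ R' → Disjoint R R') :
    Ehr {z | ∃ R ∈ S, z ∈ R} (S.card : ℚ) := by
  classical
  induction S using Finset.induction_on with
  | empty => simpa using Ehr.empty
  | insert a S ha ih =>
    have h1 := ih (fun R hR => h R (by simp [hR]))
      (fun R hR R' hR' => hd R (by simp [hR]) R' (by simp [hR']))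
    have := Ehr.union (h a (by simp)) h1 ?_
    · convert this using 1
      · ext z; simp
      · rw [Finset.card_insert_of_notMem ha]; push_cast; ring
    · rw [Set.disjoint_left]
      rintro z hz ⟨R, hR, hzR⟩
      have hne : a ≠ R := by rintro rfl; exact ha hR
      exact Set.disjoint_left.mp (hd a (by simp) R (by simp [hR]) hne) hz hzR

/-- index of the first coordinate -/
def ix {q : ℕ} (i : Fin q) : Fin (q + q + 1) := (Fin.castAdd q i).castSucc
/-- index of the second coordinate -/
def iy {q : ℕ} (i : Fin q) : Fin (q + q + 1) := (Fin.natAdd q i).castSucc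

theorem snoc_ix {q : ℕ} {α : Type*} (a b : Fin q → α) (t : α) (i : Fin q) :
    (Fin.snoc (α := fun _ => α) (Fin.append a b) t : Fin (q + q + 1) → α) (ix i) = a i := by
  rw [ix, Fin.snoc_castSucc, Fin.append_left]

theorem snoc_iy {q : ℕ} {α : Type*} (a b : Fin q → α) (t : α) (i : Fin q) :
    (Fin.snoc (α := fun _ => α) (Fin.append a b) t : Fin (q + q + 1) → α) (iy i) = b i := by
  rw [iy, Fin.snoc_castSucc, Fin.append_right]

/-- cone over a region -/
def cone {q : ℕ} (R : Set (Fin q → ℝ × ℝ)) : Set (Fin (q + q + 1) → ℝ) :=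
  {x | 0 < x (Fin.last _) ∧
    (fun i : Fin q => (x (ix i) / x (Fin.last _), x (iy i) / x (Fin.last _))) ∈ R}

theorem cone_open {q : ℕ} {R : Set (Fin q → ℝ × ℝ)} (hR : IsOpen R) : IsOpen (cone R) := by
  have h1 : IsOpen {x : Fin (q + q + 1) → ℝ | 0 < x (Fin.last _)} :=
    isOpen_lt continuous_const (continuous_apply _)
  have h2 : ContinuousOn (fun x : Fin (q + q + 1) → ℝ => (fun i : Fin q =>
      (x (ix i) / x (Fin.last _), x (iy i) / x (Fin.last _))))
      {x : Fin (q + q + 1) → ℝ | 0 < x (Fin.last _)} := by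
    refine continuousOn_pi.mpr (fun i => ?_)
    refine ContinuousOn.prodMk ?_ ?_
    · exact (continuous_apply _).continuousOn.div (continuous_apply _).continuousOn
        (fun x hx => ne_of_gt hx)
    · exact (continuous_apply _).continuousOn.div (continuous_apply _).continuousOn
        (fun x hx => ne_of_gt hx)
  exact h2.isOpen_inter_preimage h1 hR

theorem cone_convex {q : ℕ} {R : Set (Fin q → ℝ × ℝ)} (hR : Convex ℝ R) :
    Convex ℝ (cone R) := by
  rintro x ⟨hx, hxR⟩ y ⟨hy, hyR⟩ a b ha hb hab
  have hpos : 0 < a * x (Fin.last _) + b * y (Fin.last _) := by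
    rcases ha.lt_or_eq with h | h
    · have := mul_pos h hx
      have := mul_nonneg hb hy.le
      linarith
    · have : b = 1 := by linarith
      rw [← h, this]; linarith
  refine ⟨by simpa using hpos, ?_⟩
  have := hR hxR hyR (a := a * x (Fin.last _) / (a * x (Fin.last _) + b * y (Fin.last _)))
    (b := b * y (Fin.last _) / (a * x (Fin.last _) + b * y (Fin.last _)))
    (div_nonneg (mul_nonneg ha hx.le) hpos.le) (div_nonneg (mul_nonneg hb hy.le) hpos.le)
    (by rw [← add_div, div_self hpos.ne'])
  convert this using 1
  funext i
  have hx' := hx.ne'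
  have hy' := hy.ne'
  have hp' := hpos.ne'
  ext <;> simp <;> field_simp

theorem cast_cone {q : ℕ} (R : Set (Fin q → ℝ × ℝ)) (T : ℕ) (hT : 0 < T)
    (x : Fin (q + q + 1) → ℤ) (hx : x (Fin.last _) = T) :
    (fun i => (x i : ℝ)) ∈ cone R ↔ sc T (fun i => (x (ix i), x (iy i))) ∈ R := by
  have : (0 : ℝ) < T := by exact_mod_cast hT
  simp [cone, hx, hT]
  exact Iff.rfl

open Classical in
theorem ehr_of_good {q : ℕ} (K : ℕ) (R : Set (Fin q → ℝ × ℝ)) (ho : IsOpen R) (hc : Convex ℝ R)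
    (hne : R.Nonempty) (hK : ∀ z ∈ R, ∀ i, |(z i).1| < K ∧ |(z i).2| < K)
    (hg : GoodSet (cone R)) : Ehr R 1 := by
  obtain ⟨N, hN, P, hP, hP0⟩ := ehrhart K (q + q) _ _ hg 1 (cone R) (cone_open ho)
    (cone_convex hc) (by
      obtain ⟨z, hz⟩ := hne
      refine ⟨Fin.snoc (α := fun _ => ℝ) (Fin.append (fun i => (z i).1) (fun i => (z i).2)) 1, ?_⟩
      simpa [cone, snoc_ix, snoc_iy] using hz) (fun x hx => hx.1) (by
      rintro x ⟨hx, hxR⟩ i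
      have key := hK _ hxR
      refine Fin.addCases (fun i => ?_) (fun i => ?_) i
      · have := (key i).1
        dsimp only at this
        rwa [abs_div, abs_of_pos hx, div_lt_iff₀ hx] at this
      · have := (key i).2
        dsimp only at this
        rwa [abs_div, abs_of_pos hx, div_lt_iff₀ hx] at this) (fun x => rfl)
  refine ⟨N, hN, P, by rw [hP0]; simp [← two_mul, pow_mul], fun k hk => ?_⟩
  have hT : 0 < N * k := by positivity
  have h1 := hP k (by exact_mod_cast hk)
  rw [Finset.sum_boole] at h1
  have hbox : ((N : ℤ) * (k : ℤ)) = ((N * k : ℕ) : ℤ) := by push_cast; rfl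
  rw [hbox] at h1
  set F := (box K ((N * k : ℕ) : ℤ) (q + q)).filter (fun x => (fun i => (x i : ℝ)) ∈ cone R) with hF
  set unp : (Fin (q + q + 1) → ℤ) → (Fin q → ℤ × ℤ) := fun x i => (x (ix i), x (iy i)) with hunp
  have himg : {z : Fin q → ℤ × ℤ | sc (N * k) z ∈ R} = Set.image unp (F : Set (Fin (q + q + 1) → ℤ)) := by
    ext z
    constructor
    · intro hz
      set x : Fin (q + q + 1) → ℤ := Fin.snoc (α := fun _ => ℤ)
        (Fin.append (fun i => (z i).1) (fun i => (z i).2)) ((N * k : ℕ) : ℤ) with hx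
      have hxl : x (Fin.last _) = ((N * k : ℕ) : ℤ) := by simp [hx]
      have hxz : unp x = z := by
        funext i
        simp [hunp, hx, snoc_ix, snoc_iy]
      refine ⟨x, ?_, hxz⟩
      rw [hF, Finset.coe_filter]
      refine ⟨?_, ?_⟩
      · rw [mem_box]
        refine ⟨hxl, fun i => ?_⟩
        have key := hK _ hz
        have hTr : (0 : ℝ) < ((N * k : ℕ) : ℝ) := by exact_mod_cast hT
        refine Fin.addCases (fun i => ?_) (fun i => ?_) i
        · have := (key i).1
          simp only [sc] at this
          rw [abs_div, abs_of_pos hTr, div_lt_iff₀ hTr, abs_lt] at this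
          have e : x (Fin.castAdd q i).castSucc = (z i).1 := snoc_ix _ _ _ i
          rw [e]
          exact_mod_cast this
        · have := (key i).2
          simp only [sc] at this
          rw [abs_div, abs_of_pos hTr, div_lt_iff₀ hTr, abs_lt] at this
          have e : x (Fin.natAdd q i).castSucc = (z i).2 := snoc_iy _ _ _ i
          rw [e]
          exact_mod_cast this
      · rw [cast_cone R (N * k) hT x hxl]
        have : (fun i => (x (ix i), x (iy i))) = z := hxz
        rw [this]
        exact hz
    · rintro ⟨x, hx, rfl⟩
      rw [hF, Finset.coe_filter] at hx
      obtain ⟨h2, h3⟩ := hx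
      rw [mem_box] at h2
      rw [cast_cone R (N * k) hT x h2.1] at h3
      exact h3
  have hinj : Set.InjOn unp (F : Set (Fin (q + q + 1) → ℤ)) := by
    intro x hx y hy hxy
    rw [hF, Finset.coe_filter] at hx hy
    have hx1 := ((mem_box _ _ _ _).mp hx.1).1
    have hy1 := ((mem_box _ _ _ _).mp hy.1).1
    funext j
    refine Fin.lastCases ?_ (fun j => ?_) j
    · rw [hx1, hy1]
    · refine Fin.addCases (fun i => ?_) (fun i => ?_) j
      · exact congrArg Prod.fst (congrFun hxy i)
      · exact congrArg Prod.snd (congrFun hxy i)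
  rw [himg]
  refine ⟨(Finset.finite_toSet F).image _, ?_⟩
  rw [Set.InjOn.ncard_image hinj, Set.ncard_coe_finset, h1]
  simp

/-- the move functional -/
def D {q : ℕ} (i j : Fin q) (m : ℤ × ℤ) (z : Fin q → ℝ × ℝ) : ℝ :=
  ((z j).1 - (z i).1) * (m.2 : ℝ) - ((z j).2 - (z i).2) * (m.1 : ℝ)

/-- complement of the arrangement -/
def Om {q : ℕ} (I : Set (ℝ × ℝ)) (M : Finset (ℤ × ℤ)) : Set (Fin q → ℝ × ℝ) :=
  {z | (∀ i, z i ∈ I) ∧ ∀ i j, i ≠ j → ∀ m ∈ M, D i j m z ≠ 0}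

/-- the region containing a given point -/
def cell {q : ℕ} (I : Set (ℝ × ℝ)) (M : Finset (ℤ × ℤ)) (z0 : Fin q → ℝ × ℝ) :
    Set (Fin q → ℝ × ℝ) :=
  {z | (∀ i, z i ∈ I) ∧ ∀ i j, i ≠ j → ∀ m ∈ M, 0 < D i j m z0 * D i j m z}

theorem D_cont {q : ℕ} (i j : Fin q) (m : ℤ × ℤ) : Continuous (D i j m) := by
  unfold D
  fun_prop

theorem D_comb {q : ℕ} (i j : Fin q) (m : ℤ × ℤ) (z w : Fin q → ℝ × ℝ) (a b : ℝ) :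
    D i j m (a • z + b • w) = a * D i j m z + b * D i j m w := by
  simp [D]; ring

theorem cell_sub {q : ℕ} (I : Set (ℝ × ℝ)) (M : Finset (ℤ × ℤ)) (z0 : Fin q → ℝ × ℝ) :
    cell I M z0 ⊆ Om I M := by
  rintro z ⟨h1, h2⟩
  exact ⟨h1, fun i j hij m hm => right_ne_zero_of_mul (h2 i j hij m hm).ne'⟩

theorem mem_cell_self {q : ℕ} (I : Set (ℝ × ℝ)) (M : Finset (ℤ × ℤ)) (z0 : Fin q → ℝ × ℝ)
    (h : z0 ∈ Om I M) : z0 ∈ cell I M z0 :=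
  ⟨h.1, fun i j hij m hm => mul_self_pos.mpr (h.2 i j hij m hm)⟩

theorem cell_convex {q : ℕ} (I : Set (ℝ × ℝ)) (hI : Convex ℝ I) (M : Finset (ℤ × ℤ))
    (z0 : Fin q → ℝ × ℝ) : Convex ℝ (cell I M z0) := by
  rintro x ⟨hx, hx2⟩ y ⟨hy, hy2⟩ a b ha hb hab
  refine ⟨fun i => hI (hx i) (hy i) ha hb hab, fun i j hij m hm => ?_⟩
  have h1 := hx2 i j hij m hm
  have h2 := hy2 i j hij m hm
  rw [D_comb, mul_add, mul_left_comm, mul_left_comm _ b]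
  rcases ha.lt_or_eq with h | h
  · have := mul_pos h h1
    have := mul_nonneg hb h2.le
    linarith
  · have : b = 1 := by linarith
    rw [← h, this]; linarith

theorem cell_open {q : ℕ} (I : Set (ℝ × ℝ)) (hI : IsOpen I) (M : Finset (ℤ × ℤ))
    (z0 : Fin q → ℝ × ℝ) : IsOpen (cell I M z0) := by
  have : cell I M z0 = (⋂ i, {z : Fin q → ℝ × ℝ | z i ∈ I}) ∩
      ⋂ i, ⋂ j, ⋂ (_ : i ≠ j), ⋂ m ∈ M, {z | 0 < D i j m z0 * D i j m z} := by
    ext z; simp [cell]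
  rw [this]
  refine (isOpen_iInter_of_finite fun i => hI.preimage (continuous_apply i)).inter ?_
  refine isOpen_iInter_of_finite fun i => isOpen_iInter_of_finite fun j =>
    isOpen_iInter_of_finite fun _ => isOpen_biInter_finset fun m _ => ?_
  exact isOpen_lt continuous_const (continuous_const.mul (D_cont i j m))

theorem comp_eq {q : ℕ} (I : Set (ℝ × ℝ)) (hI : Convex ℝ I) (M : Finset (ℤ × ℤ))
    (z0 : Fin q → ℝ × ℝ) (h : z0 ∈ Om I M) :
    connectedComponentIn (Om I M) z0 = cell I M z0 := by
  apply Set.Subset.antisymm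
  · intro z hz
    have hzO := connectedComponentIn_subset _ _ hz
    refine ⟨hzO.1, fun i j hij m hm => ?_⟩
    by_contra hcon
    have hpre : IsPreconnected (connectedComponentIn (Om I M) z0) :=
      isPreconnected_connectedComponentIn
    have himg := hpre.image (fun w => D i j m z0 * D i j m w)
      (continuous_const.mul (D_cont i j m)).continuousOn
    have hz0 : z0 ∈ connectedComponentIn (Om I M) z0 := mem_connectedComponentIn h
    have := himg.ordConnected.out (Set.mem_image_of_mem _ hz) (Set.mem_image_of_mem _ hz0)
    have h0 : (0 : ℝ) ∈ Set.Icc (D i j m z0 * D i j m z) (D i j m z0 * D i j m z0) :=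
      ⟨not_lt.mp hcon, mul_self_nonneg _⟩
    obtain ⟨w, hw, hw0⟩ := this h0
    have hwO := (connectedComponentIn_subset _ _ hw).2 i j hij m hm
    exact mul_ne_zero (h.2 i j hij m hm) hwO hw0
  · exact (cell_convex I hI M z0).isPreconnected.subset_connectedComponentIn
      (mem_cell_self I M z0 h) (cell_sub I M z0)

theorem comps_finite {q : ℕ} (I : Set (ℝ × ℝ)) (hI : Convex ℝ I) (M : Finset (ℤ × ℤ)) :
    {C : Set (Fin q → ℝ × ℝ) | ∃ z ∈ Om I M, C = connectedComponentIn (Om I M) z}.Finite := by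
  classical
  refine Set.Finite.subset (Set.finite_range (fun s : Fin q → Fin q → M → Prop =>
    {z : Fin q → ℝ × ℝ | z ∈ Om I M ∧ ∀ i j (m : M), i ≠ j → (0 < D i j m z ↔ s i j m)})) ?_
  rintro C ⟨z, hz, rfl⟩
  refine ⟨fun i j m => 0 < D i j m z, ?_⟩
  rw [comp_eq I hI M z hz]
  ext w
  constructor
  · rintro ⟨h1, h2⟩
    refine ⟨h1.1, fun i j hij m hm => ?_⟩
    have a := h2 i j ⟨m, hm⟩ hij
    have b := h1.2 i j hij m hm
    have c := hz.2 i j hij m hm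
    dsimp only at a
    rcases lt_or_gt_of_ne c with c | c
    · have : D i j m w < 0 := lt_of_le_of_ne (not_lt.mp fun h => c.not_gt (a.mp h)) b
      exact mul_pos_of_neg_of_neg c this
    · exact mul_pos c (a.mpr c)
  · intro h
    refine ⟨cell_sub _ _ _ h, fun i j m hij => ?_⟩
    have := h.2 i j hij m m.2
    dsimp only
    constructor
    · intro h1; exact (pos_iff_pos_of_mul_pos this).mpr h1
    · intro h1; exact (pos_iff_pos_of_mul_pos this).mp h1

theorem cone_mem_good {q : ℕ} (V : Finset (ℝ × ℝ))
    (hV : ∀ v ∈ V, ∃ a b : ℚ, v = ((a : ℝ), (b : ℝ)))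
    (hBint : (interior (convexHull ℝ (V : Set (ℝ × ℝ)))).Nonempty)
    (M : Finset (ℤ × ℤ)) (z0 : Fin q → ℝ × ℝ) (h0 : z0 ∈ Om (interior (convexHull ℝ (V : Set (ℝ × ℝ)))) M) :
    GoodSet (cone (cell (interior (convexHull ℝ (V : Set (ℝ × ℝ)))) M z0)) := by
  classical
  have hl : GoodSet {x : Fin (q + q + 1) → ℝ | 0 < x (Fin.last _)} := (RatLin.coord _).good
  have hI : GoodSet {x : Fin (q + q + 1) → ℝ | ∀ i ∈ (Finset.univ : Finset (Fin q)),
      x ∈ {x : Fin (q + q + 1) → ℝ | ∀ ab ∈ V.offDiag, x ∈ {x : Fin (q + q + 1) → ℝ | ∃ s ∈ V,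
      x ∈ {x : Fin (q + q + 1) → ℝ | 0 < (ab.2.1 - ab.1.1) * (s.2 * x (Fin.last _) - x (iy i)) -
        (ab.2.2 - ab.1.2) * (s.1 * x (Fin.last _) - x (ix i))}}}} := by
    refine GoodSet.all _ _ fun i _ => GoodSet.all _ _ fun ab hab => GoodSet.ex _ _ fun s hs => ?_
    rw [Finset.mem_offDiag] at hab
    obtain ⟨a1, a2, ha⟩ := hV _ hab.1
    obtain ⟨b1, b2, hb⟩ := hV _ hab.2.1
    obtain ⟨s1, s2, hs⟩ := hV _ hs
    rw [ha, hb, hs]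
    have := RatLin.good (RatLin.sub
      (RatLin.smul (b1 - a1) (RatLin.sub (RatLin.smul s2 (RatLin.coord (Fin.last (q + q))))
        (RatLin.coord (iy i))))
      (RatLin.smul (b2 - a2) (RatLin.sub (RatLin.smul s1 (RatLin.coord (Fin.last (q + q))))
        (RatLin.coord (ix i)))))
    push_cast at this
    exact this
  have hD : GoodSet {x : Fin (q + q + 1) → ℝ | ∀ ij ∈ (Finset.univ : Finset (Fin q)).offDiag,
      x ∈ {x : Fin (q + q + 1) → ℝ | ∀ m ∈ M, x ∈ {x : Fin (q + q + 1) → ℝ |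
        0 < D ij.1 ij.2 m z0 * ((x (ix ij.2) - x (ix ij.1)) * (m.2 : ℝ) -
          (x (iy ij.2) - x (iy ij.1)) * (m.1 : ℝ))}}} := by
    refine GoodSet.all _ _ fun ij hij => GoodSet.all _ _ fun m hm => ?_
    rw [Finset.mem_offDiag] at hij
    have hne := h0.2 ij.1 ij.2 hij.2.2 m hm
    have h1 := RatLin.sub
      (RatLin.smul (m.2 : ℚ) (RatLin.sub (RatLin.coord (ix ij.2)) (RatLin.coord (ix ij.1))))
      (RatLin.smul (m.1 : ℚ) (RatLin.sub (RatLin.coord (iy ij.2)) (RatLin.coord (iy ij.1))))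
    rcases lt_or_gt_of_ne hne with h | h
    · have := (RatLin.smul (-1) h1).good
      convert this using 1
      ext x
      simp only [Set.mem_ofPred_eq]
      rw [← neg_mul_neg, mul_pos_iff_of_pos_left (neg_pos.mpr h)]
      push_cast
      constructor <;> intro h <;> linarith
    · have := h1.good
      convert this using 1
      ext x
      simp only [Set.mem_ofPred_eq]
      rw [mul_pos_iff_of_pos_left h]
      push_cast
      constructor <;> intro h <;> linarith
  convert hl.inter (hI.inter hD) using 1
  ext x
  simp only [cone, cell, Set.mem_inter_iff, Set.mem_ofPred_eq]
  refine and_congr_right fun ht => and_congr ?_ ?_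
  · simp only [mem_interior_polygon V hBint, Finset.mem_univ, true_imp_iff, Finset.mem_offDiag]
    have key : ∀ (i : Fin q) (a b s : ℝ × ℝ),
        0 < (b.1 - a.1) * (s.2 - x (iy i) / x (Fin.last _)) -
          (b.2 - a.2) * (s.1 - x (ix i) / x (Fin.last _)) ↔
        0 < (b.1 - a.1) * (s.2 * x (Fin.last _) - x (iy i)) -
          (b.2 - a.2) * (s.1 * x (Fin.last _) - x (ix i)) := by
      intro i a b s
      rw [← mul_pos_iff_of_pos_left ht]
      have ht' := ht.ne'
      apply iff_of_eq
      congr 1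
      field_simp
    simp only [key]
    constructor
    · rintro h i ⟨a, b⟩ ⟨ha, hb, hab⟩
      exact h i a ha b hb hab
    · intro h i a ha b hb hab
      exact h i ⟨a, b⟩ ⟨ha, hb, hab⟩
  · simp only [Finset.mem_univ, true_and, Finset.mem_offDiag]
    have key : ∀ (i j : Fin q) (m : ℤ × ℤ), 0 < D i j m z0 * D i j m (fun i : Fin q =>
          (x (ix i) / x (Fin.last _), x (iy i) / x (Fin.last _))) ↔
        0 < D i j m z0 * ((x (ix j) - x (ix i)) * (m.2 : ℝ) -
          (x (iy j) - x (iy i)) * (m.1 : ℝ)) := by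
      intro i j m
      rw [← mul_pos_iff_of_pos_left ht]
      have ht' := ht.ne'
      apply iff_of_eq
      congr 1
      conv_lhs => rw [mul_left_comm]
      congr 1
      simp only [D]
      field_simp
    simp only [key]
    constructor
    · rintro h ⟨i, j⟩ hij m hm
      exact h i j hij m hm
    · intro h i j hij m hm
      exact h ⟨i, j⟩ hij m hm

theorem ehr_Om {q : ℕ} (V : Finset (ℝ × ℝ))
    (hV : ∀ v ∈ V, ∃ a b : ℚ, v = ((a : ℝ), (b : ℝ)))
    (hBint : (interior (convexHull ℝ (V : Set (ℝ × ℝ)))).Nonempty)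
    (M : Finset (ℤ × ℤ)) (I : Set (ℝ × ℝ)) (hI : I = interior (convexHull ℝ (V : Set (ℝ × ℝ)))) :
    Ehr (Om I M : Set (Fin q → ℝ × ℝ)) (Set.ncard {C : Set (Fin q → ℝ × ℝ) |
      ∃ z ∈ Om I M, C = connectedComponentIn (Om I M) z} : ℚ) := by
  have hIc : Convex ℝ I := hI ▸ (convex_convexHull ℝ _).interior
  have hIo : IsOpen I := hI ▸ isOpen_interior
  obtain ⟨K, hK⟩ : ∃ K : ℕ, ∀ v ∈ I, |v.1| < K ∧ |v.2| < K := by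
    have hb : Bornology.IsBounded (convexHull ℝ (V : Set (ℝ × ℝ))) :=
      isBounded_convexHull.mpr V.finite_toSet.isBounded
    obtain ⟨R, hR⟩ := hb.exists_norm_le
    obtain ⟨K, hK⟩ := exists_nat_gt R
    refine ⟨K, fun v hv => ?_⟩
    have := hR v (interior_subset (hI ▸ hv))
    rw [Prod.norm_def, sup_le_iff] at this
    simp only [Real.norm_eq_abs] at this
    exact ⟨this.1.trans_lt hK, this.2.trans_lt hK⟩
  have hfin := comps_finite (q := q) I hIc M
  rw [Set.ncard_eq_toFinset_card _ hfin]
  have := Ehr.sUnion hfin.toFinset (fun R hR => ?_) (fun R hR R' hR' hne => ?_)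
  · convert this using 1
    ext z
    constructor
    · intro hz
      exact ⟨connectedComponentIn (Om I M) z, by rw [Set.Finite.mem_toFinset]; exact ⟨z, hz, rfl⟩,
        mem_connectedComponentIn hz⟩
    · rintro ⟨R, hR, hz⟩
      rw [Set.Finite.mem_toFinset] at hR
      obtain ⟨w, hw, rfl⟩ := hR
      exact connectedComponentIn_subset _ _ hz
  · rw [Set.Finite.mem_toFinset] at hR
    obtain ⟨w, hw, rfl⟩ := hR
    rw [comp_eq I hIc M w hw]
    refine ehr_of_good K _ (cell_open I hIo M w) (cell_convex I hIc M w)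
      ⟨w, mem_cell_self I M w hw⟩ (fun z hz i => hK _ (hz.1 i)) ?_
    subst hI
    exact cone_mem_good V hV hBint M w hw
  · rw [Set.Finite.mem_toFinset] at hR hR'
    obtain ⟨w, hw, rfl⟩ := hR
    obtain ⟨w', hw', rfl⟩ := hR'
    rw [Set.disjoint_left]
    intro z h1 h2
    exact hne ((connectedComponentIn_eq h1).trans (connectedComponentIn_eq h2).symm)

theorem board_set {q : ℕ} (M : Finset (ℤ × ℤ)) (hMne : M.Nonempty) (I : Set (ℝ × ℝ))
    (n : ℕ) :
    {z : Fin q → ℤ × ℤ |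
      Function.Injective z ∧
      (∀ i : Fin q, ((((z i).1 : ℝ), ((z i).2 : ℝ)) : ℝ × ℝ) ∈ ((n : ℝ) + 1) • I) ∧
      (∀ i j : Fin q, i ≠ j → ∀ m ∈ M,
        ((z j).1 - (z i).1) * m.2 - ((z j).2 - (z i).2) * m.1 ≠ 0)} =
    {z | sc (n + 1) z ∈ Om I M} := by
  ext z
  have hn : ((n : ℝ) + 1) ≠ 0 := by positivity
  have h1 : ∀ i, (((((z i).1 : ℝ), ((z i).2 : ℝ)) : ℝ × ℝ) ∈ ((n : ℝ) + 1) • I ↔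
      sc (n + 1) z i ∈ I) := by
    intro i
    rw [Set.mem_smul_set_iff_inv_smul_mem₀ hn]
    have : ((n : ℝ) + 1)⁻¹ • ((((z i).1 : ℝ), ((z i).2 : ℝ)) : ℝ × ℝ) = sc (n + 1) z i := by
      ext <;> simp [sc, div_eq_inv_mul]
    rw [this]
  have h2 : ∀ i j m, (((z j).1 - (z i).1) * m.2 - ((z j).2 - (z i).2) * m.1 ≠ 0 ↔
      D i j m (sc (n + 1) z) ≠ 0) := by
    intro i j m
    have e : D i j m (sc (n + 1) z) =
      ((((z j).1 - (z i).1) * m.2 - ((z j).2 - (z i).2) * m.1 : ℤ) : ℝ) / ((n : ℝ) + 1) := by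
      simp only [D, sc]; push_cast; field_simp
    rw [e, Ne, Ne, div_eq_zero_iff, or_iff_left hn, Int.cast_eq_zero]
  simp only [Set.mem_ofPred_eq, Om, h1, h2]
  constructor
  · rintro ⟨_, a, b⟩
    exact ⟨a, b⟩
  · rintro ⟨a, b⟩
    refine ⟨fun i j hij => ?_, a, b⟩
    by_contra hne
    obtain ⟨m, hm⟩ := hMne
    apply (h2 i j m).mpr (b i j hne m hm)
    rw [hij]; simp

theorem final (p : ℕ) (hp : 0 < p) (N : ℕ) (hN : 0 < N) (P g : Polynomial ℚ)
    (h : ∀ k : ℕ, 0 < k → g.eval (((N * (p * k) : ℕ) : ℚ) - 1) = P.eval ((p * k : ℕ) : ℚ)) :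
    P.eval 0 = g.eval (-1) := by
  have : g.comp (Polynomial.C ((N * p : ℕ) : ℚ) * Polynomial.X - 1) =
      P.comp (Polynomial.C (p : ℚ) * Polynomial.X) := by
    apply Polynomial.eq_of_infinite_eval_eq
    refine Set.Infinite.mono (s := Set.range (fun k : ℕ => ((k + 1 : ℕ) : ℚ))) ?_
      (Set.infinite_range_of_injective ?_)
    · rintro _ ⟨k, rfl⟩
      have := h (k + 1) (Nat.succ_pos k)
      simp only [Set.mem_ofPred_eq, Polynomial.eval_comp, Polynomial.eval_sub, Polynomial.eval_mul,
        Polynomial.eval_C, Polynomial.eval_X, Polynomial.eval_one]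
      push_cast at this ⊢
      rw [← this, mul_assoc]
    · intro a b hab
      beta_reduce at hab
      have : a + 1 = b + 1 := by exact_mod_cast hab
      omega
  have := congrArg (Polynomial.eval 0) this
  simpa using this.symm

end EH

/-- the number of connected components of `(B°)^q \ ⋃A_P^q`, i.e. of labelled
nonattacking configuration types, equals the value at `n = -1` of the constituent of
`o_P(q;n)` corresponding to `n ≡ -1 (mod p)`. -/
theorem stmt_8
    (M : Finset (ℤ × ℤ)) (hMne : M.Nonempty)
    (hMmove : ∀ m ∈ M, m ≠ 0 ∧ Int.gcd m.1 m.2 = 1)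
    (hMpar : ∀ m ∈ M, ∀ m' ∈ M, m ≠ m' → m.1 * m'.2 - m.2 * m'.1 ≠ 0)
    (V : Finset (ℝ × ℝ)) (hV : ∀ v ∈ V, ∃ a b : ℚ, v = ((a : ℝ), (b : ℝ)))
    (B : Set (ℝ × ℝ)) (hB : B = convexHull ℝ (V : Set (ℝ × ℝ)))
    (hBint : (interior B).Nonempty)
    (q : ℕ) (hq : 0 < q)
    (o : ℕ → ℕ)
    (ho : ∀ n : ℕ, o n = Set.ncard {z : Fin q → ℤ × ℤ |
      Function.Injective z ∧
      (∀ i : Fin q, ((((z i).1 : ℝ), ((z i).2 : ℝ)) : ℝ × ℝ) ∈ ((n : ℝ) + 1) • interior B) ∧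
      (∀ i j : Fin q, i ≠ j → ∀ m ∈ M,
        ((z j).1 - (z i).1) * m.2 - ((z j).2 - (z i).2) * m.1 ≠ 0)})
    (Ω : Set (Fin q → ℝ × ℝ))
    (hΩ : Ω = {z : Fin q → ℝ × ℝ | (∀ i : Fin q, z i ∈ interior B) ∧
      ∀ i j : Fin q, i ≠ j → ∀ m ∈ M,
        ((z j).1 - (z i).1) * (m.2 : ℝ) - ((z j).2 - (z i).2) * (m.1 : ℝ) ≠ 0})
    (p : ℕ) (hp : 0 < p)
    (f : ℕ → Polynomial ℚ)
    (hf : ∀ n : ℕ, (o n : ℚ) = (f (n % p)).eval (n : ℚ)) :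
    (Set.ncard {C : Set (Fin q → ℝ × ℝ) | ∃ z ∈ Ω, C = connectedComponentIn Ω z} : ℚ)
      = (f (p - 1)).eval (-1) := by
  have hΩ' : Ω = EH.Om (interior B) M := hΩ
  obtain ⟨N, hN, P, hP0, hP⟩ := EH.ehr_Om (q := q) V hV (hB ▸ hBint) M (interior B) (by rw [hB])
  rw [hΩ', ← hP0]
  refine EH.final p hp N hN P _ fun k hk => ?_
  have hpk : 0 < p * k := Nat.mul_pos hp hk
  have hT : 0 < N * (p * k) := Nat.mul_pos hN hpk
  obtain ⟨n, hn⟩ : ∃ n, N * (p * k) = n + 1 := ⟨N * (p * k) - 1, by omega⟩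
  have h1 := (hP (p * k) hpk).2
  rw [hn, ← EH.board_set M hMne (interior B) n, ← ho n, hf n] at h1
  have hmod : n % p = p - 1 := by
    have h2 : (n + 1) % p = 0 := by
      rw [← hn]
      exact Nat.mod_eq_zero_of_dvd ⟨N * k, by ring⟩
    obtain ⟨c, hc⟩ := Nat.dvd_of_mod_eq_zero h2
    obtain ⟨d, rfl⟩ : ∃ d, c = d + 1 := ⟨c - 1, by
      have : c ≠ 0 := by rintro rfl; simp at hc
      omega⟩
    have : n = (p - 1) + p * d := by
      rw [mul_add, mul_one] at hc
      omega
    rw [this, Nat.add_mul_mod_self_left, Nat.mod_eq_of_lt (by omega)]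
  rw [hmod] at h1
  rw [hn, ← h1]
  push_cast
  congr 1
  ring
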